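/- Let α ∈ (2,3), n ≥ 2, let γ₀ ∈ H^{(1+α)/2,2}(ℝ/ℤ,ℝⁿ) be injective and regular, and let h ∈ H^{(1+α)/2,2}(ℝ/ℤ,ℝⁿ). Then the directional derivative δE^α(γ₀;h) = lim_{τ→0} (E^α(γ₀+τh) − E^α(γ₀))/τ exists and δE^α(γ₀;h) = lim_{ε↘0} δE^α_ε(γ₀;h). -/

import Mathlib

open MeasureTheory Filter Set
open scoped RealInnerProductSpace ENNReal Topology

noncomputable section

/-- `ℝⁿ` -/
abbrev Rn (n : ℕ) := EuclideanSpace ℝ (Fin n)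

variable {n : ℕ}

/-- A 1-periodic curve is injective as a map on `ℝ/ℤ`. -/
def PerInjective (γ : ℝ → Rn n) : Prop :=
  ∀ u v : ℝ, γ u = γ v → ∃ k : ℤ, v = u + k

/-- `γ` is a regular curve: `γ'(u) ≠ 0` for all `u`. -/
def RegularCurve (γ : ℝ → Rn n) : Prop := ∀ u : ℝ, deriv γ u ≠ 0

/-- `γ` is parametrized by arc-length: `|γ'(u)| = 1` for all `u`. -/
def ArcLengthParam (γ : ℝ → Rn n) : Prop := ∀ u : ℝ, ‖deriv γ u‖ = 1

/-- The length `L(γ) = ∫₀¹ |γ'(θ)| dθ` of the closed curve `γ`. -/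
def curveLen (γ : ℝ → Rn n) : ℝ := ∫ θ in (0:ℝ)..1, ‖deriv γ θ‖

/-- The arc length `L(γ|_{[u,u+w]}) = |∫_u^{u+w} |γ'(θ)| dθ|`. -/
def arcLen (γ : ℝ → Rn n) (u w : ℝ) : ℝ := |∫ θ in u..(u + w), ‖deriv γ θ‖|

/-- The intrinsic distance `d_γ(u+w,u)`. -/
def idist (γ : ℝ → Rn n) (u w : ℝ) : ℝ :=
  min (arcLen γ u w) (curveLen γ - arcLen γ u w)

/-- The integrand of the O'Hara energy `E^α`. -/
def ohIntegrand (α : ℝ) (γ : ℝ → Rn n) (u w : ℝ) : ℝ :=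
  (1 / ‖γ (u + w) - γ u‖ ^ α - 1 / idist γ u w ^ α) * ‖deriv γ (u + w)‖ * ‖deriv γ u‖

/-- The O'Hara energy `E^α`, with values in `[0,∞]`. -/
def oharaE (α : ℝ) (γ : ℝ → Rn n) : ℝ≥0∞ :=
  ∫⁻ u in Ioc (0:ℝ) 1, ∫⁻ w in Ioo (-(1:ℝ)/2) (1/2), ENNReal.ofReal (ohIntegrand α γ u w)

/-- The O'Hara energy `E^α` as a real number. -/
def oharaER (α : ℝ) (γ : ℝ → Rn n) : ℝ := (oharaE α γ).toReal

/-- `[−1/2,−ε] ∪ [ε,1/2]`, the `w`-section of `U_ε`. -/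
def Wset (ε : ℝ) : Set ℝ := Icc (-(1:ℝ)/2) (-ε) ∪ Icc ε (1/2)

/-- The truncated O'Hara energy `E^α_ε`, an integral over `U_ε`. -/
def oharaEeps (α ε : ℝ) (γ : ℝ → Rn n) : ℝ :=
  ∫ u in Ioc (0:ℝ) 1, ∫ w in Wset ε, ohIntegrand α γ u w

/-- `F` has directional (Gâteaux) derivative `d` at `γ` in direction `h`. -/
def HasDirDeriv (F : (ℝ → Rn n) → ℝ) (γ h : ℝ → Rn n) (d : ℝ) : Prop :=
  Tendsto (fun τ : ℝ => (F (γ + τ • h) - F γ) / τ) (𝓝[≠] (0:ℝ)) (𝓝 d)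

/-- Squared Gagliardo seminorm `[f]²_{H^{s,2}}` of a 1-periodic map. -/
def gagliardoSq (s : ℝ) {E : Type*} [NormedAddCommGroup E] (f : ℝ → E) : ℝ≥0∞ :=
  ∫⁻ u in Ioc (0:ℝ) 1, ∫⁻ w in Ioo (-(1:ℝ)/2) (1/2),
    ENNReal.ofReal (‖f (u + w) - f u‖ ^ 2 / |w| ^ (1 + 2 * s))

/-- Membership in the fractional Sobolev space `H^{1+σ,2}(ℝ/ℤ,ℝⁿ)`, `σ ∈ (0,1)`:
a 1-periodic `C¹` function whose derivative has finite Gagliardo seminorm of order `σ`. -/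
def MemH1 (σ : ℝ) (γ : ℝ → Rn n) : Prop :=
  Function.Periodic γ 1 ∧ ContDiff ℝ 1 γ ∧ gagliardoSq σ (deriv γ) < ⊤

/-- The norm of `H^{1+σ,2}(ℝ/ℤ,ℝⁿ)`. -/
def H1Norm (σ : ℝ) (γ : ℝ → Rn n) : ℝ :=
  Real.sqrt (∫ u in Ioc (0:ℝ) 1, (‖γ u‖ ^ 2 + ‖deriv γ u‖ ^ 2)) +
    Real.sqrt ((gagliardoSq σ (deriv γ)).toReal)

/-- Membership of a 1-periodic map in `L²(ℝ/ℤ)`. -/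
def MemL2per {E : Type*} [NormedAddCommGroup E] (f : ℝ → E) : Prop :=
  Function.Periodic f 1 ∧ AEStronglyMeasurable f (volume : Measure ℝ) ∧
    IntegrableOn (fun u => ‖f u‖ ^ 2) (Ioc (0:ℝ) 1) volume

/-- Membership in the fractional Sobolev space `H^{s,2}(ℝ/ℤ)`, `s ∈ (0,1)`. -/
def MemHs0 (s : ℝ) {E : Type*} [NormedAddCommGroup E] (f : ℝ → E) : Prop :=
  MemL2per f ∧ gagliardoSq s f < ⊤

/-- The norm of `H^{s,2}(ℝ/ℤ)` for `s ∈ (0,1)`: `‖f‖_{L²} + [f]_{H^{s,2}}`. -/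
def Hs0Norm (s : ℝ) {E : Type*} [NormedAddCommGroup E] (f : ℝ → E) : ℝ :=
  Real.sqrt (∫ u in Ioc (0:ℝ) 1, ‖f u‖ ^ 2) + Real.sqrt ((gagliardoSq s f).toReal)

/-- The `k`-th Fourier coefficient (`j`-th component) of a 1-periodic curve. -/
def fCoef (γ : ℝ → Rn n) (k : ℤ) (j : Fin n) : ℂ :=
  ∫ u in (0:ℝ)..1, (γ u j : ℂ) * Complex.exp ((-2) * (Real.pi : ℂ) * Complex.I * (k : ℂ) * (u : ℂ))

/-- Membership in `H^{s,2}(ℝ/ℤ,ℝⁿ)` via the Fourier characterization: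
`((1+|k|²)^{s/2} γ̂(k))_k ∈ ℓ²`. -/
def MemHF (s : ℝ) (γ : ℝ → Rn n) : Prop :=
  Function.Periodic γ 1 ∧ Continuous γ ∧
    Summable (fun k : ℤ => (1 + (k : ℝ) ^ 2) ^ s * ∑ j, ‖fCoef γ k j‖ ^ 2)

/-- The squared Fourier norm of `H^{s,2}(ℝ/ℤ,ℝⁿ)`. -/
def fNormSq (s : ℝ) (γ : ℝ → Rn n) : ℝ :=
  ∑' k : ℤ, (1 + (k : ℝ) ^ 2) ^ s * ∑ j, ‖fCoef γ k j‖ ^ 2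

/-- C¹-norm of a 1-periodic map. -/
def c1Norm (f : ℝ → Rn n) : ℝ := ⨆ u : Icc (0:ℝ) 1, (‖f u.1‖ + ‖deriv f u.1‖)

/-- The integrand of `Q(γ,h)`. -/
def Qintegrand (α : ℝ) (γ h : ℝ → Rn n) (u w : ℝ) : ℝ :=
  ⟪deriv γ u, deriv h u⟫ / |w| ^ α
    - ⟪γ (u + w) - γ u, h (u + w) - h u⟫ / |w| ^ (α + 2)

/-- The integrand of `R(γ,h)`. -/
def Rintegrand (α : ℝ) (γ h : ℝ → Rn n) (u w : ℝ) : ℝ :=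
  2 * ⟪deriv γ u, deriv h u⟫ * (1 / ‖γ (u + w) - γ u‖ ^ α - 1 / |w| ^ α)
    - α * ⟪γ (u + w) - γ u, h (u + w) - h u⟫ *
        (1 / ‖γ (u + w) - γ u‖ ^ (α + 2) - 1 / |w| ^ (α + 2))

/-- `R(γ,h)`, an absolutely convergent double integral over `(ℝ/ℤ) × [−1/2,1/2]`. -/
def Rval (α : ℝ) (γ h : ℝ → Rn n) : ℝ :=
  ∫ p in (Ioc (0:ℝ) 1) ×ˢ (Icc (-(1:ℝ)/2) (1/2)), Rintegrand α γ h p.1 p.2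

section InnerProduct

variable {E : Type*} [NormedAddCommGroup E] [InnerProductSpace ℝ E]

/-- The defect in the Cauchy-Schwarz inequality. -/
def csDefect (a b : E) : ℝ := ‖a‖ * ‖b‖ - ⟪a, b⟫

lemma csDefect_eq (a b : E) : csDefect a b = (‖a - b‖ ^ 2 - (‖a‖ - ‖b‖) ^ 2) / 2 := by
  rw [csDefect, @norm_sub_sq_real]; ring

lemma csDefect_le (a b : E) : csDefect a b ≤ ‖a - b‖ ^ 2 := by
  rw [csDefect_eq]; nlinarith [sq_nonneg (‖a‖ - ‖b‖), sq_nonneg ‖a - b‖]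

lemma abs_norm_four_point_le {c K τ : ℝ} (hc : 0 < c) (hτ : |τ| ≤ 1) {a b p q : E}
    (ha : c ≤ ‖a‖) (hb : c ≤ ‖b‖) (ha' : c ≤ ‖a + τ • p‖) (hb' : c ≤ ‖b + τ • q‖)
    (hbK : ‖b‖ ≤ K) (hpK : ‖p‖ ≤ K) (hqK : ‖q‖ ≤ K) :
    |(‖a + τ • p‖ - ‖a‖) - (‖b + τ • q‖ - ‖b‖)| ≤
      (2 * K / c + 3 * K ^ 2 / (2 * c ^ 2)) * |τ| * (‖a - b‖ + ‖p - q‖) := by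
  have hK : 0 ≤ K := (norm_nonneg p).trans hpK
  set A := ‖a - b‖
  set P := ‖p - q‖
  have hA : 0 ≤ A := norm_nonneg _
  have hP : 0 ≤ P := norm_nonneg _
  set Sa := ‖a + τ • p‖ + ‖a‖ with hSa
  set Sb := ‖b + τ • q‖ + ‖b‖ with hSb
  set Na := 2 * ⟪a, p⟫ + τ * ‖p‖ ^ 2 with hNa
  set Nb := 2 * ⟪b, q⟫ + τ * ‖q‖ ^ 2 with hNb
  have hSa2 : 2 * c ≤ Sa := by linarith
  have hSb2 : 2 * c ≤ Sb := by linarith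
  have key : ∀ x y : E, (‖x + τ • y‖ - ‖x‖) * (‖x + τ • y‖ + ‖x‖)
      = τ * (2 * ⟪x, y⟫ + τ * ‖y‖ ^ 2) := by
    intro x y
    have := @norm_add_sq_real E _ _ x (τ • y)
    rw [inner_smul_right, norm_smul, mul_pow, Real.norm_eq_abs, sq_abs] at this
    nlinarith
  have ea : ‖a + τ • p‖ - ‖a‖ = τ * (Na / Sa) := by
    rw [← mul_div_assoc, eq_div_iff (by linarith)]; exact key a p
  have eb : ‖b + τ • q‖ - ‖b‖ = τ * (Nb / Sb) := by
    rw [← mul_div_assoc, eq_div_iff (by linarith)]; exact key b q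
  have hN : |Na - Nb| ≤ 4 * K * (A + P) := by
    have e : Na - Nb = 2 * (⟪a - b, p⟫ + ⟪b, p - q⟫) + τ * ((‖p‖ - ‖q‖) * (‖p‖ + ‖q‖)) := by
      rw [hNa, hNb, inner_sub_left, inner_sub_right]; ring
    have h1 : |⟪a - b, p⟫| ≤ A * K :=
      (abs_real_inner_le_norm _ _).trans (mul_le_mul_of_nonneg_left hpK hA)
    have h2 : |⟪b, p - q⟫| ≤ K * P :=
      (abs_real_inner_le_norm _ _).trans (mul_le_mul_of_nonneg_right hbK hP)
    have h3 : |τ * ((‖p‖ - ‖q‖) * (‖p‖ + ‖q‖))| ≤ 1 * (P * (2 * K)) := by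
      rw [abs_mul, abs_mul, abs_of_nonneg (by positivity : 0 ≤ ‖p‖ + ‖q‖)]
      gcongr
      · exact abs_norm_sub_norm_le p q
      · linarith
    rw [e]
    calc _ ≤ |2 * (⟪a - b, p⟫ + ⟪b, p - q⟫)| + |τ * ((‖p‖ - ‖q‖) * (‖p‖ + ‖q‖))| := abs_add_le _ _
      _ ≤ 2 * (|⟪a - b, p⟫| + |⟪b, p - q⟫|) + |τ * ((‖p‖ - ‖q‖) * (‖p‖ + ‖q‖))| := by
          rw [abs_mul, abs_two]; gcongr; exact abs_add_le _ _
      _ ≤ 4 * K * (A + P) := by nlinarith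
  have hNb' : |Nb| ≤ 3 * K ^ 2 := by
    have h1 : |⟪b, q⟫| ≤ K * K :=
      (abs_real_inner_le_norm _ _).trans (mul_le_mul hbK hqK (norm_nonneg _) hK)
    have h2 : |τ * ‖q‖ ^ 2| ≤ 1 * K ^ 2 := by
      rw [abs_mul, abs_of_nonneg (sq_nonneg ‖q‖)]; gcongr
    calc |Nb| ≤ |2 * ⟪b, q⟫| + |τ * ‖q‖ ^ 2| := abs_add_le _ _
      _ ≤ _ := by rw [abs_mul, abs_two]; nlinarith
  have hS : |Sb - Sa| ≤ 2 * (A + P) := by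
    have h1 : |‖b‖ - ‖a‖| ≤ A := by
      rw [abs_sub_comm]; exact abs_norm_sub_norm_le a b
    have h2 : |‖b + τ • q‖ - ‖a + τ • p‖| ≤ A + P := by
      rw [abs_sub_comm]
      refine (abs_norm_sub_norm_le _ _).trans ?_
      have : a + τ • p - (b + τ • q) = (a - b) + τ • (p - q) := by rw [smul_sub]; abel
      rw [this]
      refine (norm_add_le _ _).trans ?_
      rw [norm_smul, Real.norm_eq_abs]
      have := mul_le_mul_of_nonneg_right hτ hP
      linarith
    calc |Sb - Sa| = |(‖b + τ • q‖ - ‖a + τ • p‖) + (‖b‖ - ‖a‖)| := by rw [hSa, hSb]; ring_nf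
      _ ≤ _ := abs_add_le _ _
      _ ≤ _ := by linarith
  have e : Na / Sa - Nb / Sb = (Na - Nb) / Sa + Nb * (Sb - Sa) / (Sa * Sb) := by
    have : Sa ≠ 0 := by linarith
    have : Sb ≠ 0 := by linarith
    field_simp; ring
  rw [ea, eb, ← mul_sub, abs_mul, e, mul_right_comm, mul_comm]
  gcongr
  calc |(Na - Nb) / Sa + Nb * (Sb - Sa) / (Sa * Sb)|
      ≤ |(Na - Nb) / Sa| + |Nb * (Sb - Sa) / (Sa * Sb)| := abs_add_le _ _
    _ = |Na - Nb| / Sa + |Nb| * |Sb - Sa| / (Sa * Sb) := by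
        rw [abs_div, abs_div, abs_mul, abs_of_pos (by linarith : 0 < Sa),
          abs_of_pos (mul_pos (by linarith) (by linarith) : 0 < Sa * Sb)]
    _ ≤ (4 * K * (A + P)) / (2 * c) + (3 * K ^ 2) * (2 * (A + P)) / ((2 * c) * (2 * c)) := by
        gcongr
    _ = _ := by field_simp; ring

lemma abs_csDefect_sub_le {c K τ : ℝ} (hc : 0 < c) (hτ : |τ| ≤ 1) {a b p q : E}
    (ha : c ≤ ‖a‖) (hb : c ≤ ‖b‖) (ha' : c ≤ ‖a + τ • p‖) (hb' : c ≤ ‖b + τ • q‖)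
    (hbK : ‖b‖ ≤ K) (hpK : ‖p‖ ≤ K) (hqK : ‖q‖ ≤ K) :
    |csDefect (a + τ • p) (b + τ • q) - csDefect a b| ≤
      (1 + 2 * (2 * K / c + 3 * K ^ 2 / (2 * c ^ 2))) * |τ| * (‖a - b‖ ^ 2 + ‖p - q‖ ^ 2) := by
  have hK : 0 ≤ K := (norm_nonneg p).trans hpK
  have h4 := abs_norm_four_point_le hc hτ ha hb ha' hb' hbK hpK hqK
  set C := 2 * K / c + 3 * K ^ 2 / (2 * c ^ 2)
  have hC : 0 ≤ C := by positivity
  set A := ‖a - b‖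
  set P := ‖p - q‖
  have hA : 0 ≤ A := norm_nonneg _
  have hP : 0 ≤ P := norm_nonneg _
  have hdiff : a + τ • p - (b + τ • q) = (a - b) + τ • (p - q) := by rw [smul_sub]; abel
  have hAP : ‖a + τ • p - (b + τ • q)‖ ≤ A + P := by
    rw [hdiff]
    refine (norm_add_le _ _).trans ?_
    rw [norm_smul, Real.norm_eq_abs]
    have := mul_le_mul_of_nonneg_right hτ hP
    linarith
  have hX : |(‖a + τ • p‖ - ‖b + τ • q‖) + (‖a‖ - ‖b‖)| ≤ 2 * A + P := by
    refine (abs_add_le _ _).trans ?_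
    have h1 := (abs_norm_sub_norm_le (a + τ • p) (b + τ • q)).trans hAP
    have h2 := abs_norm_sub_norm_le a b
    linarith
  have h1 : |‖a + τ • p - (b + τ • q)‖ ^ 2 - A ^ 2| ≤ |τ| * (A ^ 2 + 2 * P ^ 2) := by
    rw [hdiff, @norm_add_sq_real, inner_smul_right, norm_smul, mul_pow, Real.norm_eq_abs, sq_abs]
    have e : A ^ 2 + 2 * (τ * ⟪a - b, p - q⟫) + τ ^ 2 * P ^ 2 - A ^ 2
        = τ * (2 * ⟪a - b, p - q⟫ + τ * P ^ 2) := by ring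
    rw [e, abs_mul]
    gcongr
    refine (abs_add_le _ _).trans ?_
    rw [abs_mul, abs_mul, abs_two, abs_of_nonneg (sq_nonneg P)]
    have := abs_real_inner_le_norm (a - b) (p - q)
    have := mul_le_mul_of_nonneg_right hτ (sq_nonneg P)
    nlinarith [sq_nonneg (A - P)]
  have h2 : |(‖a + τ • p‖ - ‖b + τ • q‖) ^ 2 - (‖a‖ - ‖b‖) ^ 2|
      ≤ (C * |τ| * (A + P)) * (2 * A + P) := by
    have e : (‖a + τ • p‖ - ‖b + τ • q‖) ^ 2 - (‖a‖ - ‖b‖) ^ 2 =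
        ((‖a + τ • p‖ - ‖a‖) - (‖b + τ • q‖ - ‖b‖)) *
          ((‖a + τ • p‖ - ‖b + τ • q‖) + (‖a‖ - ‖b‖)) := by ring
    rw [e, abs_mul]
    gcongr
  have h3 : (C * |τ| * (A + P)) * (2 * A + P) ≤ C * |τ| * (4 * (A ^ 2 + P ^ 2)) := by
    rw [mul_assoc]
    refine mul_le_mul_of_nonneg_left ?_ (by positivity)
    nlinarith [sq_nonneg (A - P), sq_nonneg A, sq_nonneg P]
  rw [csDefect_eq, csDefect_eq]
  have e : (‖a + τ • p - (b + τ • q)‖ ^ 2 - (‖a + τ • p‖ - ‖b + τ • q‖) ^ 2) / 2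
      - (A ^ 2 - (‖a‖ - ‖b‖) ^ 2) / 2 = ((‖a + τ • p - (b + τ • q)‖ ^ 2 - A ^ 2) -
      ((‖a + τ • p‖ - ‖b + τ • q‖) ^ 2 - (‖a‖ - ‖b‖) ^ 2)) / 2 := by ring
  rw [e, abs_div, abs_two, div_le_iff₀ two_pos]
  refine (abs_sub _ _).trans ?_
  nlinarith [mul_nonneg (abs_nonneg τ) (sq_nonneg A), mul_nonneg (abs_nonneg τ) (sq_nonneg P)]

/-- The defect in the triangle inequality, as a double integral of Cauchy-Schwarz defects. -/
lemma sq_integral_norm_sub_sq_norm_integral [CompleteSpace E] {X : Type*} [MeasurableSpace X]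
    {μ : Measure X} {F : X → E} (hF : Integrable F μ) :
    (∫ s, ‖F s‖ ∂μ) ^ 2 - ‖∫ s, F s ∂μ‖ ^ 2 = ∫ s, ∫ t, csDefect (F s) (F t) ∂μ ∂μ := by
  have h1 : ∀ s, ∫ t, csDefect (F s) (F t) ∂μ = ‖F s‖ * (∫ t, ‖F t‖ ∂μ) - ⟪F s, ∫ t, F t ∂μ⟫ := by
    intro s
    simp only [csDefect]
    rw [integral_sub (hF.norm.const_mul _) (hF.const_inner _), integral_const_mul, integral_inner hF]
  simp only [h1]
  rw [integral_sub (hF.norm.mul_const _) (hF.inner_const _), integral_mul_const]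
  have h2 : (fun s => ⟪F s, ∫ t, F t ∂μ⟫) = fun s => ⟪∫ t, F t ∂μ, F s⟫ :=
    funext fun s => real_inner_comm _ _
  rw [h2, integral_inner hF, real_inner_self_eq_norm_sq, sq]

end InnerProduct

lemma abs_rpow_neg_sub_le {m β x y : ℝ} (hm : 0 < m) (hβ : 0 < β) (hx : m ≤ x) (hy : m ≤ y) :
    |y ^ (-β) - x ^ (-β)| ≤ β * m ^ (-β - 1) * |y - x| := by
  have := Convex.norm_image_sub_le_of_norm_hasDerivWithin_le (f := fun x : ℝ => x ^ (-β))
    (f' := fun x => -β * x ^ (-β - 1)) (s := Ici m) (x := x) (y := y) (C := β * m ^ (-β - 1))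
    (fun z hz => (Real.hasDerivAt_rpow_const (Or.inl (hm.trans_le hz).ne')).hasDerivWithinAt)
    (fun z hz => by
      rw [norm_mul, Real.norm_eq_abs, Real.norm_eq_abs, abs_neg, abs_of_pos hβ,
        abs_of_nonneg (Real.rpow_nonneg (hm.le.trans hz) _)]
      gcongr β * ?_
      exact Real.rpow_le_rpow_of_nonpos hm hz (by linarith))
    (convex_Ici m) hx hy
  simpa only [Real.norm_eq_abs] using this

/-- Second-order difference estimate for `x ↦ x ^ (-β)`. -/
lemma abs_rpow_neg_four_point_le {m β x₀ y₀ x₁ y₁ : ℝ} (hm : 0 < m) (hβ : 0 < β)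
    (hx₀ : m ≤ x₀) (hxy₀ : x₀ ≤ y₀) (hx₁ : m ≤ x₁) (hy₁ : m ≤ y₁) :
    |(x₁ ^ (-β) - y₁ ^ (-β)) - (x₀ ^ (-β) - y₀ ^ (-β))| ≤
      β * (β + 1) * m ^ (-β - 2) * (y₀ - x₀) * |x₁ - x₀| +
        β * m ^ (-β - 1) * |(y₁ - x₁) - (y₀ - x₀)| := by
  set e := y₀ - x₀ with he
  have he0 : 0 ≤ e := sub_nonneg.2 hxy₀
  have h1 : |((x₁ + e) ^ (-β) - y₁ ^ (-β))| ≤ β * m ^ (-β - 1) * |(y₁ - x₁) - (y₀ - x₀)| := by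
    have := abs_rpow_neg_sub_le hm hβ hy₁ (by linarith : m ≤ x₁ + e)
    rwa [abs_sub_comm (x₁ + e) y₁, ← sub_sub] at this
  have h2 : |(x₁ ^ (-β) - (x₁ + e) ^ (-β)) - (x₀ ^ (-β) - (x₀ + e) ^ (-β))| ≤
      β * (β + 1) * m ^ (-β - 2) * e * |x₁ - x₀| := by
    have := Convex.norm_image_sub_le_of_norm_hasDerivWithin_le
      (f := fun x : ℝ => x ^ (-β) - (x + e) ^ (-β))
      (f' := fun x => -β * x ^ (-β - 1) - -β * (x + e) ^ (-β - 1)) (s := Ici m)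
      (x := x₀) (y := x₁) (C := β * (β + 1) * m ^ (-β - 2) * e)
      (fun z hz => by
        have hz' : 0 < z := hm.trans_le hz
        refine HasDerivAt.hasDerivWithinAt (HasDerivAt.sub
          (Real.hasDerivAt_rpow_const (Or.inl hz'.ne')) ?_)
        have := (Real.hasDerivAt_rpow_const (p := -β) (x := z + e)
          (Or.inl (by linarith))).comp_add_const z e
        exact this)
      (fun z hz => by
        have hz' : m ≤ z := hz
        rw [← mul_sub, norm_mul, Real.norm_eq_abs, Real.norm_eq_abs, abs_neg, abs_of_pos hβ]
        have := abs_rpow_neg_sub_le hm (by linarith : 0 < β + 1) (by linarith : m ≤ z + e) hz'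
        rw [show -(β + 1) = -β - 1 by ring, show -β - 1 - 1 = -β - 2 by ring,
          sub_add_cancel_left, abs_neg, abs_of_nonneg he0] at this
        calc _ ≤ β * ((β + 1) * m ^ (-β - 2) * e) := by gcongr
          _ = _ := by ring)
      (convex_Ici m) hx₀ hx₁
    simpa only [Real.norm_eq_abs] using this
  rw [show x₁ ^ (-β) - y₁ ^ (-β) - (x₀ ^ (-β) - y₀ ^ (-β)) =
    ((x₁ ^ (-β) - (x₁ + e) ^ (-β)) - (x₀ ^ (-β) - (x₀ + e) ^ (-β))) +
      ((x₁ + e) ^ (-β) - y₁ ^ (-β)) by rw [he, add_sub_cancel]; ring]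
  exact (abs_add_le _ _).trans (add_le_add h2 h1)

lemma lintegral_Ioc_comp_add_of_periodic {F : ℝ → ℝ≥0∞} (hF : Function.Periodic F 1) (c : ℝ) :
    ∫⁻ u in Ioc (0:ℝ) 1, F (u + c) = ∫⁻ u in Ioc (0:ℝ) 1, F u := by
  have h1 : ∫⁻ u in Ioc (0:ℝ) 1, F (u + c) = ∫⁻ u in Ioc c (c + 1), F u := by
    have := (measurePreserving_add_right volume c).setLIntegral_comp_preimage_emb
      (measurableEmbedding_addRight c) F (Ioc c (c + 1))
    rw [← this]
    simp [add_comm]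
  rw [h1]
  have h2 := isAddFundamentalDomain_Ioc one_pos 0
  rw [zero_add] at h2
  refine (isAddFundamentalDomain_Ioc one_pos c).setLIntegral_eq h2 F ?_
  rintro ⟨g, hg⟩ x
  obtain ⟨k, rfl⟩ := AddSubgroup.mem_zmultiples_iff.1 hg
  have := hF.zsmul k x
  rwa [add_comm] at this

lemma setLIntegral_Ioo_comp_mul_le (g : ℝ → ℝ≥0∞) (hg : Measurable g) {l r : ℝ} (hl : l ≠ 0)
    (hl1 : |l| ≤ 1) :
    ∫⁻ w in Ioo (-r) r, g (l * w) ≤ ENNReal.ofReal |l|⁻¹ * ∫⁻ w in Ioo (-r) r, g w := by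
  rw [← lintegral_indicator measurableSet_Ioo, ← lintegral_indicator measurableSet_Ioo]
  have h := Real.map_volume_mul_left hl
  have h2 : ∫⁻ w, (Ioo (-r) r).indicator g (l * w) =
      ENNReal.ofReal |l|⁻¹ * ∫⁻ w, (Ioo (-r) r).indicator g w := by
    rw [← abs_inv, ← smul_eq_mul, ← lintegral_smul_measure, ← h,
      lintegral_map (hg.indicator measurableSet_Ioo) (measurable_const_mul l)]
  rw [← h2]
  refine lintegral_mono fun w => ?_
  by_cases hw : w ∈ Ioo (-r) r
  · have : l * w ∈ Ioo (-r) r := by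
      rw [mem_Ioo, ← abs_lt] at *
      rw [abs_mul]
      nlinarith [abs_nonneg w]
    simp [hw, this]
  · simp [hw]

/-- The mean squared oscillation of `f` on the segment between `u` and `u + w`. -/
def meanSqOsc (f : ℝ → Rn n) (u w : ℝ) : ℝ :=
  ∫ s in Ioc (0:ℝ) 1, ∫ t in Ioc (0:ℝ) 1, ‖f (u + s * w) - f (u + t * w)‖ ^ 2

lemma integrable_prod_restrict_Ioc {F : ℝ × ℝ → ℝ} (hF : Continuous F) :
    Integrable F ((volume.restrict (Ioc (0:ℝ) 1)).prod (volume.restrict (Ioc (0:ℝ) 1))) := by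
  rw [Measure.prod_restrict]
  exact (hF.continuousOn.integrableOn_compact (isCompact_Icc.prod isCompact_Icc)).mono_set
    (prod_mono Ioc_subset_Icc_self Ioc_subset_Icc_self)

lemma meanSqOsc_eq {f : ℝ → Rn n} (hf : Continuous f) (u w : ℝ) :
    meanSqOsc f u w = ∫ q, ‖f (u + q.1 * w) - f (u + q.2 * w)‖ ^ 2
      ∂(volume.restrict (Ioc (0:ℝ) 1)).prod (volume.restrict (Ioc (0:ℝ) 1)) := by
  rw [integral_prod _ (integrable_prod_restrict_Ioc (by fun_prop)), meanSqOsc]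

lemma meanSqOsc_nonneg (f : ℝ → Rn n) (u w : ℝ) : 0 ≤ meanSqOsc f u w :=
  integral_nonneg fun _ => integral_nonneg fun _ => by positivity

lemma lintegral_osc_le_gagliardoSq {f : ℝ → Rn n} (hf : Continuous f)
    (hper : Function.Periodic f 1) {σ : ℝ} (hσ : 0 ≤ σ) {s t : ℝ} (hst : |s - t| ≤ 1) :
    ∫⁻ u in Ioc (0:ℝ) 1, ∫⁻ w in Ioo (-(1:ℝ)/2) (1/2),
      ENNReal.ofReal (‖f (u + s * w) - f (u + t * w)‖ ^ 2 / |w| ^ (1 + 2 * σ))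
      ≤ gagliardoSq σ f := by
  rcases eq_or_ne s t with rfl | hne
  · simp
  have hl : s - t ≠ 0 := sub_ne_zero.2 hne
  have hm : ∀ a b : ℝ, Measurable (fun p : ℝ × ℝ =>
      ENNReal.ofReal (‖f (p.1 + a * p.2) - f (p.1 + b * p.2)‖ ^ 2 / |p.2| ^ (1 + 2 * σ))) := by
    intro a b
    refine ENNReal.measurable_ofReal.comp (Measurable.div ?_ ?_)
    · exact Continuous.measurable (by fun_prop)
    · exact (Continuous.measurable (by fun_prop)).pow_const _
  rw [lintegral_lintegral_swap (hm s t).aemeasurable]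
  have h1 : ∀ w : ℝ, ∫⁻ u in Ioc (0:ℝ) 1,
      ENNReal.ofReal (‖f (u + s * w) - f (u + t * w)‖ ^ 2 / |w| ^ (1 + 2 * σ)) =
      ∫⁻ u in Ioc (0:ℝ) 1,
        ENNReal.ofReal (‖f (u + (s - t) * w) - f (u + 0 * w)‖ ^ 2 / |w| ^ (1 + 2 * σ)) := by
    intro w
    rw [← lintegral_Ioc_comp_add_of_periodic (F := fun u =>
      ENNReal.ofReal (‖f (u + (s - t) * w) - f (u + 0 * w)‖ ^ 2 / |w| ^ (1 + 2 * σ))) ?_ (t * w)]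
    · refine lintegral_congr fun u => ?_
      rw [show u + t * w + (s - t) * w = u + s * w by ring,
        show u + t * w + 0 * w = u + t * w by ring]
    · intro u
      simp only [add_right_comm u 1, hper (u + _)]
  simp only [h1]
  rw [lintegral_lintegral_swap]
  · refine lintegral_mono fun u => ?_
    set g : ℝ → ℝ≥0∞ := fun w => ENNReal.ofReal (‖f (u + w) - f u‖ ^ 2 / |w| ^ (1 + 2 * σ)) with hg
    have hgm : Measurable g := by
      refine ENNReal.measurable_ofReal.comp (Measurable.div ?_ ?_)
      · exact Continuous.measurable (by fun_prop)
      · exact (Continuous.measurable (by fun_prop)).pow_const _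
    have e : ∀ w, ENNReal.ofReal (‖f (u + (s - t) * w) - f (u + 0 * w)‖ ^ 2 / |w| ^ (1 + 2 * σ))
        = ENNReal.ofReal (|s - t| ^ (1 + 2 * σ)) * g ((s - t) * w) := by
      intro w
      have hp : 0 < |s - t| ^ (1 + 2 * σ) := Real.rpow_pos_of_pos (abs_pos.2 hl) _
      rw [hg, ← ENNReal.ofReal_mul hp.le, abs_mul, Real.mul_rpow (abs_nonneg _) (abs_nonneg _),
        zero_mul, add_zero]
      congr 1
      rw [mul_div_assoc', mul_div_mul_left _ _ hp.ne']
    simp only [e]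
    rw [lintegral_const_mul _ (by fun_prop : Measurable fun w => g ((s - t) * w)),
      show (-(1:ℝ)/2) = -(1/2) by ring]
    calc _ ≤ ENNReal.ofReal (|s - t| ^ (1 + 2 * σ)) *
          (ENNReal.ofReal |s - t|⁻¹ * ∫⁻ w in Ioo (-(1/2)) (1/2), g w) := by
          gcongr
          exact setLIntegral_Ioo_comp_mul_le g hgm hl hst
      _ ≤ 1 * ∫⁻ w in Ioo (-(1/2)) (1/2), g w := by
          rw [← mul_assoc]
          gcongr
          rw [← ENNReal.ofReal_mul (by positivity), ENNReal.ofReal_le_one,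
            Real.rpow_add (abs_pos.2 hl), Real.rpow_one, mul_right_comm,
            mul_inv_cancel₀ (abs_ne_zero.2 hl), one_mul]
          exact Real.rpow_le_one (abs_nonneg _) hst (by linarith)
      _ = _ := one_mul _
  · exact ((hm (s - t) 0).comp measurable_swap).aemeasurable

lemma continuous_meanSqOsc {f : ℝ → Rn n} (hf : Continuous f) :
    Continuous (fun p : ℝ × ℝ => meanSqOsc f p.1 p.2) := by
  unfold meanSqOsc
  simp only [← intervalIntegral.integral_of_le zero_le_one]
  refine intervalIntegral.continuous_parametric_intervalIntegral_of_continuous' ?_ 0 1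
  refine intervalIntegral.continuous_parametric_intervalIntegral_of_continuous'
    (f := fun (x : (ℝ × ℝ) × ℝ) t => ‖f (x.1.1 + x.2 * x.1.2) - f (x.1.1 + t * x.1.2)‖ ^ 2) ?_ 0 1
  fun_prop

/-- The domain `(0, 1] × (-1/2, 1/2)` of the energy integrals. -/
def energyDom : Set (ℝ × ℝ) := Ioc (0:ℝ) 1 ×ˢ Ioo (-(1:ℝ)/2) (1/2)

lemma integrableOn_meanSqOsc {f : ℝ → Rn n} (hf : Continuous f)
    (hper : Function.Periodic f 1) {σ : ℝ} (hσ : 0 ≤ σ) (hfin : gagliardoSq σ f < ⊤) :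
    IntegrableOn (fun p : ℝ × ℝ => meanSqOsc f p.1 p.2 / |p.2| ^ (1 + 2 * σ)) energyDom := by
  have hmeas : Measurable (fun p : ℝ × ℝ => meanSqOsc f p.1 p.2 / |p.2| ^ (1 + 2 * σ)) :=
    (continuous_meanSqOsc hf).measurable.div
      ((Continuous.measurable (by fun_prop)).pow_const _)
  refine ⟨hmeas.aestronglyMeasurable, ?_⟩
  rw [hasFiniteIntegral_iff_ofReal (Eventually.of_forall fun p =>
    div_nonneg (meanSqOsc_nonneg f _ _) (by positivity))]
  set ν := (volume.restrict (Ioc (0:ℝ) 1)).prod (volume.restrict (Ioc (0:ℝ) 1)) with hν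
  have e : ∀ p : ℝ × ℝ, ENNReal.ofReal (meanSqOsc f p.1 p.2 / |p.2| ^ (1 + 2 * σ)) =
      ∫⁻ q, ENNReal.ofReal (‖f (p.1 + q.1 * p.2) - f (p.1 + q.2 * p.2)‖ ^ 2 /
        |p.2| ^ (1 + 2 * σ)) ∂ν := by
    intro p
    rw [meanSqOsc_eq hf, ← integral_div, ofReal_integral_eq_lintegral_ofReal]
    · exact (integrable_prod_restrict_Ioc (by fun_prop)).div_const _
    · exact Eventually.of_forall fun q => by positivity
  simp only [e]
  have hm : Measurable (fun x : (ℝ × ℝ) × (ℝ × ℝ) =>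
      ENNReal.ofReal (‖f (x.1.1 + x.2.1 * x.1.2) - f (x.1.1 + x.2.2 * x.1.2)‖ ^ 2 /
        |x.1.2| ^ (1 + 2 * σ))) := by
    refine ENNReal.measurable_ofReal.comp (Measurable.div ?_ ?_)
    · exact Continuous.measurable (by fun_prop)
    · exact (Continuous.measurable (by fun_prop)).pow_const _
  rw [lintegral_lintegral_swap hm.aemeasurable]
  have hν1 : ν univ = 1 := by
    rw [hν, ← univ_prod_univ, Measure.prod_prod]; simp
  calc _ ≤ ∫⁻ q, gagliardoSq σ f ∂ν := by
        refine lintegral_mono_ae ?_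
        rw [hν, Measure.prod_restrict]
        filter_upwards [ae_restrict_mem (measurableSet_Ioc.prod measurableSet_Ioc)] with q hq
        rw [energyDom, Measure.volume_eq_prod, ← Measure.prod_restrict, lintegral_prod]
        · refine lintegral_osc_le_gagliardoSq hf hper hσ ?_
          rw [abs_le]
          obtain ⟨⟨h1, h2⟩, h3, h4⟩ := hq
          constructor <;> linarith
        · exact (hm.comp (measurable_id.prodMk measurable_const)).aemeasurable
    _ = gagliardoSq σ f := by rw [lintegral_const, hν1, mul_one]
    _ < ⊤ := hfin

/-- The mean velocity of `f` on the segment between `u` and `u + w`. -/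
def meanVel (f : ℝ → Rn n) (u w : ℝ) : Rn n := ∫ s in Ioc (0:ℝ) 1, deriv f (u + s * w)

/-- The mean speed of `f` on the segment between `u` and `u + w`. -/
def meanSpeed (f : ℝ → Rn n) (u w : ℝ) : ℝ := ∫ s in Ioc (0:ℝ) 1, ‖deriv f (u + s * w)‖

section Curve

variable {f : ℝ → Rn n}

lemma sub_eq_smul_meanVel (hf : ContDiff ℝ 1 f) (u w : ℝ) :
    f (u + w) - f u = w • meanVel f u w := by
  have h1 := intervalIntegral.smul_integral_comp_add_mul (a := 0) (b := 1) (deriv f) w u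
  rw [mul_zero, mul_one, add_zero, intervalIntegral.integral_deriv_eq_sub
    (fun x _ => (hf.differentiable one_ne_zero) x)
    ((hf.continuous_deriv le_rfl).intervalIntegrable _ _),
    intervalIntegral.integral_of_le zero_le_one] at h1
  rw [← h1, meanVel]
  simp only [mul_comm]

lemma integral_norm_deriv_eq (f : ℝ → Rn n) (u w : ℝ) :
    ∫ θ in u..(u + w), ‖deriv f θ‖ = w * meanSpeed f u w := by
  have h1 := intervalIntegral.smul_integral_comp_add_mul (a := 0) (b := 1)
    (fun θ => ‖deriv f θ‖) w u
  rw [mul_zero, mul_one, add_zero, intervalIntegral.integral_of_le zero_le_one] at h1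
  rw [← h1, meanSpeed, smul_eq_mul]
  simp only [mul_comm w]

lemma meanSpeed_nonneg (f : ℝ → Rn n) (u w : ℝ) : 0 ≤ meanSpeed f u w :=
  integral_nonneg fun _ => norm_nonneg _

lemma arcLen_eq (f : ℝ → Rn n) (u w : ℝ) : arcLen f u w = |w| * meanSpeed f u w := by
  rw [arcLen, integral_norm_deriv_eq, abs_mul, abs_of_nonneg (meanSpeed_nonneg f u w)]

lemma norm_meanVel_le_meanSpeed (f : ℝ → Rn n) (u w : ℝ) : ‖meanVel f u w‖ ≤ meanSpeed f u w :=
  norm_integral_le_integral_norm _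

lemma integrable_segment {E : Type*} [NormedAddCommGroup E] {g : ℝ → E} (hg : Continuous g)
    (u w : ℝ) : Integrable (fun s => g (u + s * w)) (volume.restrict (Ioc (0:ℝ) 1)) :=
  (Continuous.integrableOn_Icc (by fun_prop)).mono_set Ioc_subset_Icc_self

lemma sq_meanSpeed_sub_sq_norm_meanVel (hf : ContDiff ℝ 1 f) (u w : ℝ) :
    meanSpeed f u w ^ 2 - ‖meanVel f u w‖ ^ 2 =
      ∫ s in Ioc (0:ℝ) 1, ∫ t in Ioc (0:ℝ) 1,
        csDefect (deriv f (u + s * w)) (deriv f (u + t * w)) :=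
  sq_integral_norm_sub_sq_norm_integral (integrable_segment (hf.continuous_deriv le_rfl) u w)

lemma continuous_meanSpeed (hf : ContDiff ℝ 1 f) :
    Continuous (fun p : ℝ × ℝ => meanSpeed f p.1 p.2) := by
  have := hf.continuous_deriv le_rfl
  unfold meanSpeed
  simp only [← intervalIntegral.integral_of_le zero_le_one]
  refine intervalIntegral.continuous_parametric_intervalIntegral_of_continuous' ?_ 0 1
  fun_prop

lemma continuous_meanVel (hf : ContDiff ℝ 1 f) :
    Continuous (fun p : ℝ × ℝ => meanVel f p.1 p.2) := by
  have := hf.continuous_deriv le_rfl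
  unfold meanVel
  simp only [← intervalIntegral.integral_of_le zero_le_one]
  refine intervalIntegral.continuous_parametric_intervalIntegral_of_continuous' ?_ 0 1
  fun_prop

lemma continuous_arcLen (hf : ContDiff ℝ 1 f) :
    Continuous (fun p : ℝ × ℝ => arcLen f p.1 p.2) := by
  have := continuous_meanSpeed hf
  simp only [arcLen_eq]
  fun_prop

lemma measurable_ohIntegrand (hf : ContDiff ℝ 1 f) (α : ℝ) :
    Measurable (fun p : ℝ × ℝ => ohIntegrand α f p.1 p.2) := by
  have h1 := hf.continuous_deriv le_rfl
  have h2 := hf.continuous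
  have h3 : Continuous (fun p : ℝ × ℝ => idist f p.1 p.2) :=
    (continuous_arcLen hf).min (continuous_const.sub (continuous_arcLen hf))
  unfold ohIntegrand
  refine (Measurable.mul (Measurable.sub ?_ ?_) ?_).mul ?_
  · exact ((Continuous.measurable (by fun_prop)).pow_const _).const_div _
  · exact (h3.measurable.pow_const _).const_div _
  · exact Continuous.measurable (by fun_prop)
  · exact Continuous.measurable (by fun_prop)

lemma Function.Periodic.deriv' {f : ℝ → Rn n} {c : ℝ} (hf : Function.Periodic f c) :
    Function.Periodic (deriv f) c := by
  intro x
  rw [← deriv_comp_add_const]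
  congr 1
  exact funext hf

lemma norm_sub_le_idist (hf : ContDiff ℝ 1 f) (hper : Function.Periodic f 1) {u w : ℝ}
    (hw : |w| ≤ 1) : ‖f (u + w) - f u‖ ≤ idist f u w := by
  have hd := hf.continuous_deriv le_rfl
  have hchord : ∀ x y : ℝ, x ≤ y → ‖f y - f x‖ ≤ ∫ θ in x..y, ‖deriv f θ‖ := by
    intro x y hxy
    rw [← intervalIntegral.integral_deriv_eq_sub
      (fun x _ => (hf.differentiable one_ne_zero) x) (hd.intervalIntegrable _ _)]
    exact intervalIntegral.norm_integral_le_integral_norm hxy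
  have hii : ∀ x y : ℝ, IntervalIntegrable (fun θ => ‖deriv f θ‖) volume x y :=
    fun x y => hd.norm.intervalIntegrable _ _
  have hcompl : ∀ x y : ℝ, x ≤ y → y ≤ x + 1 →
      ‖f y - f x‖ ≤ curveLen f - ∫ θ in x..y, ‖deriv f θ‖ := by
    intro x y _ hyx
    have hp : Function.Periodic (fun θ => ‖deriv f θ‖) 1 := hper.deriv'.comp _
    have h1 := hp.intervalIntegral_add_eq 0 x
    rw [zero_add] at h1
    rw [curveLen, h1, intervalIntegral.integral_interval_sub_left (hii _ _) (hii _ _),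
      norm_sub_rev, ← hper x]
    exact hchord y (x + 1) hyx
  rw [abs_le] at hw
  rw [idist, arcLen]
  rcases le_total 0 w with h0 | h0
  · rw [abs_of_nonneg (intervalIntegral.integral_nonneg (by linarith) fun _ _ => norm_nonneg _)]
    exact le_min (hchord _ _ (by linarith)) (hcompl _ _ (by linarith) (by linarith))
  · rw [intervalIntegral.integral_symm, abs_neg,
      abs_of_nonneg (intervalIntegral.integral_nonneg (by linarith) fun _ _ => norm_nonneg _),
      norm_sub_rev]
    exact le_min (hchord _ _ (by linarith)) (hcompl _ _ (by linarith) (by linarith))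

lemma ohIntegrand_nonneg (hf : ContDiff ℝ 1 f) (hper : Function.Periodic f 1) {α u w : ℝ}
    (hα : 0 ≤ α) (hw : |w| ≤ 1) (hne : f (u + w) ≠ f u) : 0 ≤ ohIntegrand α f u w := by
  have h0 : 0 < ‖f (u + w) - f u‖ := norm_pos_iff.2 (sub_ne_zero.2 hne)
  have := norm_sub_le_idist hf hper (u := u) hw
  refine mul_nonneg (mul_nonneg (sub_nonneg.2 ?_) (norm_nonneg _)) (norm_nonneg _)
  gcongr

lemma ohIntegrand_eq (hf : ContDiff ℝ 1 f) (hper : Function.Periodic f 1) {α u w : ℝ}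
    (hw : |w| ≤ 1) :
    ohIntegrand α f u w = (‖f (u + w) - f u‖ ^ (-α) - idist f u w ^ (-α)) *
      ‖deriv f (u + w)‖ * ‖deriv f u‖ := by
  rw [ohIntegrand, Real.rpow_neg (norm_nonneg _), Real.rpow_neg
    ((norm_nonneg _).trans (norm_sub_le_idist hf hper hw)), one_div, one_div]

lemma ohIntegrand_eq_of_le (hf : ContDiff ℝ 1 f) {α u w : ℝ}
    (hlen : 2 * arcLen f u w ≤ curveLen f) :
    ohIntegrand α f u w = ((‖meanVel f u w‖ ^ 2) ^ (-(α / 2)) - (meanSpeed f u w ^ 2) ^ (-(α / 2)))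
      / |w| ^ α * (‖deriv f (u + w)‖ * ‖deriv f u‖) := by
  have key : ∀ x : ℝ, 0 ≤ x → 1 / (|w| * x) ^ α = (x ^ 2) ^ (-(α / 2)) / |w| ^ α := by
    intro x hx
    rw [Real.mul_rpow (abs_nonneg _) hx, ← Real.rpow_natCast x 2, ← Real.rpow_mul hx,
      show ((2:ℕ):ℝ) * -(α / 2) = -α by push_cast; ring, Real.rpow_neg hx, one_div, mul_inv_rev,
      div_eq_mul_inv]
  rw [ohIntegrand, idist, min_eq_left (by linarith), sub_eq_smul_meanVel hf, arcLen_eq,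
    norm_smul, Real.norm_eq_abs, key _ (norm_nonneg _), key _ (meanSpeed_nonneg _ _ _),
    ← sub_div, mul_assoc]

end Curve

section Deformation

variable {γ h : ℝ → Rn n}

lemma contDiff_add_smul (hγ : ContDiff ℝ 1 γ) (hh : ContDiff ℝ 1 h) (τ : ℝ) :
    ContDiff ℝ 1 (γ + τ • h) := hγ.add (hh.const_smul τ)

lemma periodic_add_smul (hγ : Function.Periodic γ 1) (hh : Function.Periodic h 1) (τ : ℝ) :
    Function.Periodic (γ + τ • h) 1 := fun x => by simp [hγ x, hh x]

lemma deriv_add_smul (hγ : ContDiff ℝ 1 γ) (hh : ContDiff ℝ 1 h) (τ x : ℝ) :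
    deriv (γ + τ • h) x = deriv γ x + τ • deriv h x := by
  have h1 := (hγ.differentiable one_ne_zero) x
  have h2 := (hh.differentiable one_ne_zero) x
  rw [deriv_add h1 (h2.const_smul τ), deriv_const_smul _ h2]

lemma meanVel_add_smul (hγ : ContDiff ℝ 1 γ) (hh : ContDiff ℝ 1 h) (τ u w : ℝ) :
    meanVel (γ + τ • h) u w = meanVel γ u w + τ • meanVel h u w := by
  simp only [meanVel, deriv_add_smul hγ hh]
  have hτ : Integrable (fun s => τ • deriv h (u + s * w)) (volume.restrict (Ioc (0:ℝ) 1)) :=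
    (integrable_segment (hh.continuous_deriv le_rfl) u w).smul τ
  rw [integral_add (integrable_segment (hγ.continuous_deriv le_rfl) u w) hτ, integral_smul]

/-- Uniform bounds on the curves `γ + τ • h` for `|τ| ≤ τ₀`. -/
structure DeformationBounds (γ h : ℝ → Rn n) (c K τ₀ : ℝ) : Prop where
  c_pos : 0 < c
  K_pos : 0 < K
  τ₀_pos : 0 < τ₀
  τ₀_le : τ₀ ≤ 1
  speed_le : ∀ x, ‖deriv γ x‖ ≤ K
  dir_le : ∀ x, ‖deriv h x‖ ≤ K
  le_speed : ∀ τ, |τ| ≤ τ₀ → ∀ x, c ≤ ‖deriv (γ + τ • h) x‖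
  le_meanVel : ∀ τ, |τ| ≤ τ₀ → ∀ u ∈ Ioc (0:ℝ) 1, ∀ w, |w| ≤ 1 / 2 →
    c ≤ ‖meanVel (γ + τ • h) u w‖

lemma exists_norm_le_of_periodic {f : ℝ → Rn n} (hf : Continuous f) (hper : Function.Periodic f 1) :
    ∃ K, ∀ x, ‖f x‖ ≤ K := by
  obtain ⟨K, hK⟩ := (isCompact_Icc (a := (0:ℝ)) (b := 1)).exists_bound_of_continuousOn
    hf.continuousOn
  refine ⟨K, fun x => ?_⟩
  obtain ⟨y, hy, hxy⟩ := hper.exists_mem_Ico₀ one_pos x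
  rw [hxy]
  exact hK y (Ico_subset_Icc_self hy)

lemma norm_meanVel_le {f : ℝ → Rn n} {K : ℝ} (hK : ∀ x, ‖deriv f x‖ ≤ K) (u w : ℝ) :
    ‖meanVel f u w‖ ≤ K := by
  have := norm_setIntegral_le_of_norm_le_const (μ := volume) (s := Ioc (0:ℝ) 1)
    (f := fun s => deriv f (u + s * w)) (C := K) (by simp) (fun s _ => hK _)
  simpa [meanVel] using this

lemma exists_deformationBounds (hγ : ContDiff ℝ 1 γ) (hh : ContDiff ℝ 1 h)
    (hγp : Function.Periodic γ 1) (hhp : Function.Periodic h 1)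
    (hinj : PerInjective γ) (hreg : RegularCurve γ) :
    ∃ c K τ₀, DeformationBounds γ h c K τ₀ := by
  obtain ⟨K₁, hK₁⟩ := exists_norm_le_of_periodic (hγ.continuous_deriv le_rfl) hγp.deriv'
  obtain ⟨K₂, hK₂⟩ := exists_norm_le_of_periodic (hh.continuous_deriv le_rfl) hhp.deriv'
  set K := max (max K₁ K₂) 1 with hK
  have hγK : ∀ x, ‖deriv γ x‖ ≤ K := fun x =>
    (hK₁ x).trans ((le_max_left _ _).trans (le_max_left _ _))
  have hhK : ∀ x, ‖deriv h x‖ ≤ K := fun x =>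
    (hK₂ x).trans ((le_max_right _ _).trans (le_max_left _ _))
  have hK0 : 0 < K := one_pos.trans_le (le_max_right _ _)
  obtain ⟨p, hp, hpmin⟩ := ((isCompact_Icc (a := (0:ℝ)) (b := 1)).prod
    (isCompact_Icc (a := (-(1/2):ℝ)) (b := 1/2))).exists_isMinOn ⟨(0, 0), by norm_num⟩
    (continuous_meanVel hγ).norm.continuousOn
  have hpos : 0 < ‖meanVel γ p.1 p.2‖ := by
    rw [norm_pos_iff]
    intro h0
    by_cases hw : p.2 = 0
    · simp [hw, meanVel, hreg p.1] at h0
    · have h1 := sub_eq_smul_meanVel hγ p.1 p.2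
      rw [h0, smul_zero, sub_eq_zero] at h1
      obtain ⟨k, hk⟩ := hinj _ _ h1
      obtain ⟨_, h2, h3⟩ := hp
      have hk' : p.2 = ((-k : ℤ) : ℝ) := by push_cast; linarith
      rw [hk'] at h2 h3 hw
      have h4 : (-1 : ℝ) < ((-k : ℤ) : ℝ) := by linarith
      have h5 : ((-k : ℤ) : ℝ) < 1 := by linarith
      have h6 : -1 < -k := by exact_mod_cast h4
      have h7 : -k < 1 := by exact_mod_cast h5
      exact hw (by exact_mod_cast (by omega : -k = 0))
  set c₀ := ‖meanVel γ p.1 p.2‖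
  have hmv : ∀ u ∈ Icc (0:ℝ) 1, ∀ w, |w| ≤ 1 / 2 → c₀ ≤ ‖meanVel γ u w‖ := fun u hu w hw =>
    hpmin (a := (u, w)) ⟨hu, abs_le.1 hw⟩
  have hsp : ∀ x, c₀ ≤ ‖deriv γ x‖ := by
    intro x
    obtain ⟨y, hy, hxy⟩ := hγp.deriv'.exists_mem_Ico₀ one_pos x
    rw [hxy]
    simpa [meanVel] using hmv y (Ico_subset_Icc_self hy) 0 (by norm_num)
  have hsub : ∀ (τ : ℝ) (a b : Rn n), |τ| ≤ min 1 (c₀ / (2 * K)) → c₀ ≤ ‖a‖ → ‖b‖ ≤ K →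
      c₀ / 2 ≤ ‖a + τ • b‖ := by
    intro τ a b hτ ha hb
    have h1 : ‖τ • b‖ ≤ c₀ / 2 := by
      rw [norm_smul, Real.norm_eq_abs]
      calc |τ| * ‖b‖ ≤ c₀ / (2 * K) * K := by
            gcongr; exact hτ.trans (min_le_right _ _)
        _ = c₀ / 2 := by field_simp
    have h2 := norm_sub_norm_le a (-(τ • b))
    rw [sub_neg_eq_add, norm_neg] at h2
    linarith
  refine ⟨c₀ / 2, K, min 1 (c₀ / (2 * K)), by positivity, hK0, by positivity, min_le_left _ _,
    hγK, hhK, fun τ hτ x => ?_, fun τ hτ u hu w hw => ?_⟩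
  · rw [deriv_add_smul hγ hh]
    exact hsub τ _ _ hτ (hsp x) (hhK x)
  · rw [meanVel_add_smul hγ hh]
    exact hsub τ _ _ hτ (hmv u (Ioc_subset_Icc_self hu) w hw) (norm_meanVel_le hhK u w)

namespace DeformationBounds

variable {c K τ₀ : ℝ}

lemma speed_add_le (B : DeformationBounds γ h c K τ₀) (hγ : ContDiff ℝ 1 γ) (hh : ContDiff ℝ 1 h)
    {τ : ℝ} (hτ : |τ| ≤ τ₀) (x : ℝ) : ‖deriv (γ + τ • h) x‖ ≤ 2 * K := by
  rw [deriv_add_smul hγ hh]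
  refine (norm_add_le _ _).trans ?_
  rw [norm_smul, Real.norm_eq_abs]
  have := mul_le_mul (hτ.trans B.τ₀_le) (B.dir_le x) (norm_nonneg _) zero_le_one
  linarith [B.speed_le x]

lemma abs_speed_sub_le (B : DeformationBounds γ h c K τ₀) (hγ : ContDiff ℝ 1 γ)
    (hh : ContDiff ℝ 1 h) (τ x : ℝ) :
    |‖deriv (γ + τ • h) x‖ - ‖deriv γ x‖| ≤ |τ| * K := by
  rw [deriv_add_smul hγ hh]
  refine (abs_norm_sub_norm_le _ _).trans ?_
  rw [add_sub_cancel_left, norm_smul, Real.norm_eq_abs]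
  exact mul_le_mul_of_nonneg_left (B.dir_le x) (abs_nonneg _)

lemma abs_speed_mul_sub_le (B : DeformationBounds γ h c K τ₀) (hγ : ContDiff ℝ 1 γ)
    (hh : ContDiff ℝ 1 h) {τ : ℝ} (hτ : |τ| ≤ τ₀) (x y : ℝ) :
    |‖deriv (γ + τ • h) x‖ * ‖deriv (γ + τ • h) y‖ - ‖deriv γ x‖ * ‖deriv γ y‖| ≤
      3 * K ^ 2 * |τ| := by
  have e : ‖deriv (γ + τ • h) x‖ * ‖deriv (γ + τ • h) y‖ - ‖deriv γ x‖ * ‖deriv γ y‖ =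
    (‖deriv (γ + τ • h) x‖ - ‖deriv γ x‖) * ‖deriv (γ + τ • h) y‖ +
      ‖deriv γ x‖ * (‖deriv (γ + τ • h) y‖ - ‖deriv γ y‖) := by ring
  rw [e]
  refine (abs_add_le _ _).trans ?_
  rw [abs_mul, abs_mul, abs_norm, abs_norm]
  have h1 := mul_le_mul (B.abs_speed_sub_le hγ hh τ x) (B.speed_add_le hγ hh hτ y)
    (norm_nonneg _) (mul_nonneg (abs_nonneg τ) B.K_pos.le)
  have h2 := mul_le_mul (B.speed_le x) (B.abs_speed_sub_le hγ hh τ y)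
    (abs_nonneg _) B.K_pos.le
  nlinarith

/-- Difference estimate for a product of the speeds with a further factor. -/
lemma abs_mul_speed_sub_le (B : DeformationBounds γ h c K τ₀) (hγ : ContDiff ℝ 1 γ)
    (hh : ContDiff ℝ 1 h) {τ : ℝ} (hτ : |τ| ≤ τ₀) (x y : ℝ) {a₁ a₀ L M : ℝ}
    (hL : |a₁ - a₀| ≤ L * |τ|) (hM : |a₀| ≤ M) :
    |a₁ * (‖deriv (γ + τ • h) x‖ * ‖deriv (γ + τ • h) y‖) - a₀ * (‖deriv γ x‖ * ‖deriv γ y‖)| ≤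
      (4 * K ^ 2 * L + 3 * K ^ 2 * M) * |τ| := by
  have e : a₁ * (‖deriv (γ + τ • h) x‖ * ‖deriv (γ + τ • h) y‖) - a₀ * (‖deriv γ x‖ * ‖deriv γ y‖)
    = (a₁ - a₀) * (‖deriv (γ + τ • h) x‖ * ‖deriv (γ + τ • h) y‖) + a₀ *
      (‖deriv (γ + τ • h) x‖ * ‖deriv (γ + τ • h) y‖ - ‖deriv γ x‖ * ‖deriv γ y‖) := by ring
  rw [e]
  refine (abs_add_le _ _).trans ?_
  rw [abs_mul, abs_mul, abs_mul, abs_norm, abs_norm]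
  have hK := B.K_pos
  have h1 : ‖deriv (γ + τ • h) x‖ * ‖deriv (γ + τ • h) y‖ ≤ (2 * K) * (2 * K) :=
    mul_le_mul (B.speed_add_le hγ hh hτ x) (B.speed_add_le hγ hh hτ y) (norm_nonneg _)
      (by linarith)
  have h2 := mul_le_mul hL h1 (by positivity) ((abs_nonneg _).trans hL)
  have h3 := mul_le_mul hM (B.abs_speed_mul_sub_le hγ hh hτ x y) (abs_nonneg _)
    ((abs_nonneg _).trans hM)
  linarith

lemma abs_mul_speed_le (B : DeformationBounds γ h c K τ₀) (x y : ℝ) {a₀ M : ℝ} (hM : |a₀| ≤ M) :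
    |a₀ * (‖deriv γ x‖ * ‖deriv γ y‖)| ≤ K ^ 2 * M := by
  rw [abs_mul, abs_mul, abs_norm, abs_norm]
  have h1 : ‖deriv γ x‖ * ‖deriv γ y‖ ≤ K * K :=
    mul_le_mul (B.speed_le x) (B.speed_le y) (norm_nonneg _) B.K_pos.le
  have := mul_le_mul hM h1 (by positivity) ((abs_nonneg _).trans hM)
  linarith

lemma zero_mem (B : DeformationBounds γ h c K τ₀) : |(0:ℝ)| ≤ τ₀ := by
  rw [abs_zero]; exact B.τ₀_pos.le

lemma le_curveLen (B : DeformationBounds γ h c K τ₀) (hγ : ContDiff ℝ 1 γ) (hh : ContDiff ℝ 1 h)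
    {τ : ℝ} (hτ : |τ| ≤ τ₀) : c ≤ curveLen (γ + τ • h) := by
  have h1 := intervalIntegral.integral_mono_on (a := 0) (b := 1) (μ := volume) zero_le_one
    intervalIntegrable_const
    (((contDiff_add_smul hγ hh τ).continuous_deriv le_rfl).norm.intervalIntegrable _ _)
    (fun x _ => B.le_speed τ hτ x)
  simpa [curveLen] using h1

lemma meanSpeed_le (B : DeformationBounds γ h c K τ₀) (hγ : ContDiff ℝ 1 γ) (hh : ContDiff ℝ 1 h)
    {τ : ℝ} (hτ : |τ| ≤ τ₀) (u w : ℝ) : meanSpeed (γ + τ • h) u w ≤ 2 * K := by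
  have := setIntegral_mono_on (integrable_segment
    ((contDiff_add_smul hγ hh τ).continuous_deriv le_rfl).norm u w)
    (integrable_const (2 * K)) measurableSet_Ioc
    (fun s (_ : s ∈ Ioc (0:ℝ) 1) => B.speed_add_le hγ hh hτ (u + s * w))
  simpa [meanSpeed] using this

lemma two_arcLen_le (B : DeformationBounds γ h c K τ₀) (hγ : ContDiff ℝ 1 γ)
    (hh : ContDiff ℝ 1 h) {τ : ℝ} (hτ : |τ| ≤ τ₀) (u : ℝ) {w : ℝ} (hw : 4 * K * |w| ≤ c) :
    2 * arcLen (γ + τ • h) u w ≤ curveLen (γ + τ • h) := by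
  rw [arcLen_eq]
  have := mul_le_mul_of_nonneg_left (B.meanSpeed_le hγ hh hτ u w) (abs_nonneg w)
  linarith [B.le_curveLen hγ hh hτ]

end DeformationBounds

end Deformation

lemma sq_norm_le_sq_meanSpeed (f : ℝ → Rn n) (u w : ℝ) :
    ‖meanVel f u w‖ ^ 2 ≤ meanSpeed f u w ^ 2 :=
  pow_le_pow_left₀ (norm_nonneg _) (norm_meanVel_le_meanSpeed f u w) 2

lemma integrable_csDefect_segment {f : ℝ → Rn n} (hf : ContDiff ℝ 1 f) (u w : ℝ) :
    Integrable (fun q : ℝ × ℝ => csDefect (deriv f (u + q.1 * w)) (deriv f (u + q.2 * w)))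
      ((volume.restrict (Ioc (0:ℝ) 1)).prod (volume.restrict (Ioc (0:ℝ) 1))) := by
  have := hf.continuous_deriv le_rfl
  unfold csDefect
  exact integrable_prod_restrict_Ioc (by fun_prop)

lemma sq_meanSpeed_sub_eq {f : ℝ → Rn n} (hf : ContDiff ℝ 1 f) (u w : ℝ) :
    meanSpeed f u w ^ 2 - ‖meanVel f u w‖ ^ 2 =
      ∫ q, csDefect (deriv f (u + q.1 * w)) (deriv f (u + q.2 * w))
        ∂(volume.restrict (Ioc (0:ℝ) 1)).prod (volume.restrict (Ioc (0:ℝ) 1)) := by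
  rw [sq_meanSpeed_sub_sq_norm_meanVel hf, integral_prod _ (integrable_csDefect_segment hf u w)]

lemma sq_meanSpeed_sub_le {f : ℝ → Rn n} (hf : ContDiff ℝ 1 f) (u w : ℝ) :
    meanSpeed f u w ^ 2 - ‖meanVel f u w‖ ^ 2 ≤ meanSqOsc (deriv f) u w := by
  have := hf.continuous_deriv le_rfl
  rw [sq_meanSpeed_sub_eq hf, meanSqOsc_eq this]
  exact integral_mono (integrable_csDefect_segment hf u w)
    (integrable_prod_restrict_Ioc (by fun_prop)) fun q => csDefect_le _ _

namespace DeformationBounds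

variable {γ h : ℝ → Rn n} {c K τ₀ : ℝ}

lemma abs_defect_sub_le (B : DeformationBounds γ h c K τ₀) (hγ : ContDiff ℝ 1 γ)
    (hh : ContDiff ℝ 1 h) {τ : ℝ} (hτ : |τ| ≤ τ₀) (u w : ℝ) :
    |(meanSpeed (γ + τ • h) u w ^ 2 - ‖meanVel (γ + τ • h) u w‖ ^ 2) -
        (meanSpeed γ u w ^ 2 - ‖meanVel γ u w‖ ^ 2)| ≤
      (1 + 2 * (2 * K / c + 3 * K ^ 2 / (2 * c ^ 2))) * |τ| *
        (meanSqOsc (deriv γ) u w + meanSqOsc (deriv h) u w) := by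
  have hγd := hγ.continuous_deriv le_rfl
  have hhd := hh.continuous_deriv le_rfl
  have hfτ := contDiff_add_smul hγ hh τ
  have i1 : Integrable (fun q : ℝ × ℝ =>
      ‖deriv γ (u + q.1 * w) - deriv γ (u + q.2 * w)‖ ^ 2)
      ((volume.restrict (Ioc (0:ℝ) 1)).prod (volume.restrict (Ioc (0:ℝ) 1))) :=
    integrable_prod_restrict_Ioc (by fun_prop)
  have i2 : Integrable (fun q : ℝ × ℝ =>
      ‖deriv h (u + q.1 * w) - deriv h (u + q.2 * w)‖ ^ 2)
      ((volume.restrict (Ioc (0:ℝ) 1)).prod (volume.restrict (Ioc (0:ℝ) 1))) :=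
    integrable_prod_restrict_Ioc (by fun_prop)
  rw [sq_meanSpeed_sub_eq hfτ, sq_meanSpeed_sub_eq hγ, meanSqOsc_eq hγd, meanSqOsc_eq hhd,
    ← integral_sub (integrable_csDefect_segment hfτ u w) (integrable_csDefect_segment hγ u w),
    ← integral_add i1 i2, ← integral_const_mul, ← Real.norm_eq_abs]
  refine norm_integral_le_of_norm_le ((i1.add i2).const_mul _) (Eventually.of_forall fun q => ?_)
  have h0 := fun x => B.le_speed 0 B.zero_mem x
  have h1 := fun x => B.le_speed τ hτ x
  simp only [zero_smul, add_zero] at h0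
  simp only [deriv_add_smul hγ hh] at h1 ⊢
  rw [Real.norm_eq_abs]
  exact abs_csDefect_sub_le B.c_pos (hτ.trans B.τ₀_le) (h0 _) (h0 _) (h1 _) (h1 _)
    (B.speed_le _) (B.dir_le _) (B.dir_le _)

lemma abs_sq_norm_meanVel_sub_le (B : DeformationBounds γ h c K τ₀) (hγ : ContDiff ℝ 1 γ)
    (hh : ContDiff ℝ 1 h) {τ : ℝ} (hτ : |τ| ≤ τ₀) (u w : ℝ) :
    |‖meanVel (γ + τ • h) u w‖ ^ 2 - ‖meanVel γ u w‖ ^ 2| ≤ 3 * K ^ 2 * |τ| := by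
  have h1 := norm_meanVel_le (B.speed_add_le hγ hh hτ) u w
  have h2 := norm_meanVel_le B.speed_le u w
  have h3 : |‖meanVel (γ + τ • h) u w‖ - ‖meanVel γ u w‖| ≤ |τ| * K := by
    refine (abs_norm_sub_norm_le _ _).trans ?_
    rw [meanVel_add_smul hγ hh, add_sub_cancel_left, norm_smul, Real.norm_eq_abs]
    exact mul_le_mul_of_nonneg_left (norm_meanVel_le B.dir_le u w) (abs_nonneg _)
  rw [sq_sub_sq, abs_mul, abs_of_nonneg (by positivity :
    0 ≤ ‖meanVel (γ + τ • h) u w‖ + ‖meanVel γ u w‖)]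
  have := mul_le_mul (by linarith : ‖meanVel (γ + τ • h) u w‖ + ‖meanVel γ u w‖ ≤ 3 * K) h3
    (abs_nonneg _) (by linarith [B.K_pos])
  linarith

/-- Estimates of the energy integrand near the diagonal. -/
lemma exists_near_bound (B : DeformationBounds γ h c K τ₀) (hγ : ContDiff ℝ 1 γ)
    (hh : ContDiff ℝ 1 h) {α : ℝ} (hα : 0 < α) :
    ∃ C, 0 ≤ C ∧ ∀ u ∈ Ioc (0:ℝ) 1, ∀ w : ℝ, |w| ≤ 1 / 2 → 4 * K * |w| ≤ c →
      |ohIntegrand α γ u w| ≤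
        C * ((meanSqOsc (deriv γ) u w + meanSqOsc (deriv h) u w) / |w| ^ α) ∧
      ∀ τ, |τ| ≤ τ₀ → |ohIntegrand α (γ + τ • h) u w - ohIntegrand α γ u w| ≤
        C * ((meanSqOsc (deriv γ) u w + meanSqOsc (deriv h) u w) / |w| ^ α) * |τ| := by
  have hc := B.c_pos
  have hK := B.K_pos
  set C₁ := 1 + 2 * (2 * K / c + 3 * K ^ 2 / (2 * c ^ 2)) with hC₁
  set C₂ := α / 2 * (α / 2 + 1) * (c ^ 2) ^ (-(α / 2) - 2) with hC₂
  set C₃ := α / 2 * (c ^ 2) ^ (-(α / 2) - 1) with hC₃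
  have h1 : 0 ≤ C₁ := by positivity
  have h2 : 0 ≤ C₂ := by positivity
  have h3 : 0 ≤ C₃ := by positivity
  refine ⟨4 * K ^ 2 * (C₂ * (3 * K ^ 2) + C₃ * C₁) + 3 * K ^ 2 * C₃ + K ^ 2 * C₃, by positivity,
    fun u hu w hw hwc => ?_⟩
  set G := meanSqOsc (deriv γ) u w
  set H := meanSqOsc (deriv h) u w
  have hG : 0 ≤ G := meanSqOsc_nonneg _ _ _
  have hH : 0 ≤ H := meanSqOsc_nonneg _ _ _
  have hV : ∀ τ, |τ| ≤ τ₀ → c ^ 2 ≤ ‖meanVel (γ + τ • h) u w‖ ^ 2 := fun τ hτ =>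
    pow_le_pow_left₀ hc.le (B.le_meanVel τ hτ u hu w hw) 2
  have hV0 := hV 0 B.zero_mem
  have hl0 := B.two_arcLen_le hγ hh B.zero_mem u hwc
  rw [zero_smul, add_zero] at hV0 hl0
  have hS0 := hV0.trans (sq_norm_le_sq_meanSpeed γ u w)
  have hwα : 0 ≤ |w| ^ α := by positivity
  have hdef := sq_meanSpeed_sub_le hγ u w
  have ha0 : |((‖meanVel γ u w‖ ^ 2) ^ (-(α / 2)) - (meanSpeed γ u w ^ 2) ^ (-(α / 2))) / |w| ^ α|
      ≤ C₃ * ((G + H) / |w| ^ α) := by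
    rw [abs_div, abs_of_nonneg hwα, mul_div_assoc']
    gcongr
    refine (abs_rpow_neg_sub_le (by positivity) (half_pos hα) hS0 hV0).trans ?_
    refine mul_le_mul_of_nonneg_left ?_ h3
    rw [abs_sub_comm, abs_of_nonneg (sub_nonneg.2 (sq_norm_le_sq_meanSpeed γ u w))]
    linarith
  have hGH : 0 ≤ (G + H) / |w| ^ α := by positivity
  rw [ohIntegrand_eq_of_le hγ hl0]
  refine ⟨(B.abs_mul_speed_le _ _ ha0).trans ?_, fun τ hτ => ?_⟩
  · rw [← mul_assoc]
    refine mul_le_mul_of_nonneg_right ?_ hGH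
    linarith [show 0 ≤ 4 * K ^ 2 * (C₂ * (3 * K ^ 2) + C₃ * C₁) + 3 * K ^ 2 * C₃ by positivity]
  · rw [ohIntegrand_eq_of_le (contDiff_add_smul hγ hh τ) (B.two_arcLen_le hγ hh hτ u hwc)]
    have hS := (hV τ hτ).trans (sq_norm_le_sq_meanSpeed (γ + τ • h) u w)
    have hL : |((‖meanVel (γ + τ • h) u w‖ ^ 2) ^ (-(α / 2)) -
          (meanSpeed (γ + τ • h) u w ^ 2) ^ (-(α / 2))) / |w| ^ α -
        ((‖meanVel γ u w‖ ^ 2) ^ (-(α / 2)) - (meanSpeed γ u w ^ 2) ^ (-(α / 2))) / |w| ^ α| ≤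
        ((C₂ * (3 * K ^ 2) + C₃ * C₁) * ((G + H) / |w| ^ α)) * |τ| := by
      rw [← sub_div, abs_div, abs_of_nonneg hwα, mul_div_assoc', div_mul_eq_mul_div]
      gcongr
      refine (abs_rpow_neg_four_point_le (by positivity) (half_pos hα) hV0
        (sq_norm_le_sq_meanSpeed γ u w) (hV τ hτ) hS).trans ?_
      have e1 := B.abs_sq_norm_meanVel_sub_le hγ hh hτ u w
      have e2 : _ ≤ C₁ * |τ| * (G + H) := B.abs_defect_sub_le hγ hh hτ u w
      rw [← hC₂, ← hC₃]
      have e3 : C₂ * (meanSpeed γ u w ^ 2 - ‖meanVel γ u w‖ ^ 2) *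
          |‖meanVel (γ + τ • h) u w‖ ^ 2 - ‖meanVel γ u w‖ ^ 2| ≤
          C₂ * (G + H) * (3 * K ^ 2 * |τ|) := by
        gcongr
        linarith
      have e4 := mul_le_mul_of_nonneg_left e2 h3
      linarith
    refine (B.abs_mul_speed_sub_le hγ hh hτ _ _ hL ha0).trans ?_
    refine mul_le_mul_of_nonneg_right ?_ (abs_nonneg τ)
    have : 0 ≤ K ^ 2 * C₃ * ((G + H) / |w| ^ α) := by positivity
    linarith

lemma abs_idist_sub_le (B : DeformationBounds γ h c K τ₀) (hγ : ContDiff ℝ 1 γ)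
    (hh : ContDiff ℝ 1 h) (τ u : ℝ) {w : ℝ} (hw : |w| ≤ 1) :
    |idist (γ + τ • h) u w - idist γ u w| ≤ 2 * K * |τ| := by
  have hK := B.K_pos
  have key : ∀ x w : ℝ, |w| ≤ 1 → |(∫ θ in x..(x + w), ‖deriv (γ + τ • h) θ‖) -
      ∫ θ in x..(x + w), ‖deriv γ θ‖| ≤ K * |τ| := by
    intro x w hw
    rw [← intervalIntegral.integral_sub
      (((contDiff_add_smul hγ hh τ).continuous_deriv le_rfl).norm.intervalIntegrable _ _)
      ((hγ.continuous_deriv le_rfl).norm.intervalIntegrable _ _)]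
    rw [← Real.norm_eq_abs]
    refine (intervalIntegral.norm_integral_le_of_norm_le_const (C := |τ| * K)
      fun θ _ => (Real.norm_eq_abs _).trans_le (B.abs_speed_sub_le hγ hh τ θ)).trans ?_
    rw [add_sub_cancel_left]
    nlinarith [mul_nonneg (abs_nonneg τ) hK.le]
  have h1 : |arcLen (γ + τ • h) u w - arcLen γ u w| ≤ K * |τ| :=
    (abs_abs_sub_abs_le _ _).trans (key u w hw)
  have h2 : |curveLen (γ + τ • h) - curveLen γ| ≤ K * |τ| := by
    simpa [curveLen] using key 0 1 (by simp)
  unfold idist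
  refine (abs_min_sub_min_le_max _ _ _ _).trans (max_le ?_ ?_)
  · nlinarith [abs_nonneg τ]
  · rw [abs_le] at *
    constructor <;> linarith [h1.1, h1.2, h2.1, h2.2]

/-- Estimates of the energy integrand away from the diagonal. -/
lemma exists_far_bound (B : DeformationBounds γ h c K τ₀) (hγ : ContDiff ℝ 1 γ)
    (hh : ContDiff ℝ 1 h) (hγp : Function.Periodic γ 1) (hhp : Function.Periodic h 1)
    {α : ℝ} (hα : 0 < α) :
    ∃ C, 0 ≤ C ∧ ∀ u ∈ Ioc (0:ℝ) 1, ∀ w : ℝ, |w| ≤ 1 / 2 → c ≤ 4 * K * |w| →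
      |ohIntegrand α γ u w| ≤ C ∧
      ∀ τ, |τ| ≤ τ₀ → |ohIntegrand α (γ + τ • h) u w - ohIntegrand α γ u w| ≤ C * |τ| := by
  have hc := B.c_pos
  have hK := B.K_pos
  set m := c / (4 * K) * c with hm
  have hm0 : 0 < m := by positivity
  set L := α * m ^ (-α - 1) with hL
  have hL0 : 0 ≤ L := by positivity
  refine ⟨4 * K ^ 2 * (3 * K * L) + 3 * K ^ 2 * m ^ (-α) + K ^ 2 * m ^ (-α), by positivity,
    fun u hu w hw hwc => ?_⟩
  have hw1 : |w| ≤ 1 := by linarith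
  have hD : ∀ τ, |τ| ≤ τ₀ → m ≤ ‖(γ + τ • h) (u + w) - (γ + τ • h) u‖ := by
    intro τ hτ
    rw [sub_eq_smul_meanVel (contDiff_add_smul hγ hh τ), norm_smul, Real.norm_eq_abs]
    refine mul_le_mul ?_ (B.le_meanVel τ hτ u hu w hw) hc.le (abs_nonneg w)
    rw [div_le_iff₀ (by positivity)]; linarith
  have hd : ∀ τ, |τ| ≤ τ₀ → m ≤ idist (γ + τ • h) u w := fun τ hτ => (hD τ hτ).trans
    (norm_sub_le_idist (contDiff_add_smul hγ hh τ) (periodic_add_smul hγp hhp τ) hw1)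
  have hD0 := hD 0 B.zero_mem
  have hd0 := hd 0 B.zero_mem
  rw [zero_smul, add_zero] at hD0 hd0
  have ha0 : |‖γ (u + w) - γ u‖ ^ (-α) - idist γ u w ^ (-α)| ≤ m ^ (-α) := by
    have h1 := Real.rpow_le_rpow_of_nonpos hm0 hD0 (neg_nonpos.2 hα.le)
    have h2 := Real.rpow_le_rpow_of_nonpos hm0 hd0 (neg_nonpos.2 hα.le)
    have h3 := Real.rpow_nonneg (hm0.le.trans hD0) (-α)
    have h4 := Real.rpow_nonneg (hm0.le.trans hd0) (-α)
    rw [abs_le]; constructor <;> linarith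
  rw [ohIntegrand_eq hγ hγp hw1, mul_assoc]
  refine ⟨(B.abs_mul_speed_le _ _ ha0).trans ?_, fun τ hτ => ?_⟩
  · linarith [show 0 ≤ 4 * K ^ 2 * (3 * K * L) + 3 * K ^ 2 * m ^ (-α) by positivity]
  · rw [ohIntegrand_eq (contDiff_add_smul hγ hh τ) (periodic_add_smul hγp hhp τ) hw1, mul_assoc]
    have e1 := abs_rpow_neg_sub_le hm0 hα hD0 (hD τ hτ)
    have e2 := abs_rpow_neg_sub_le hm0 hα hd0 (hd τ hτ)
    have e3 : |‖(γ + τ • h) (u + w) - (γ + τ • h) u‖ - ‖γ (u + w) - γ u‖| ≤ K * |τ| := by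
      refine (abs_norm_sub_norm_le _ _).trans ?_
      rw [sub_eq_smul_meanVel (contDiff_add_smul hγ hh τ), sub_eq_smul_meanVel hγ, ← smul_sub,
        meanVel_add_smul hγ hh, add_sub_cancel_left, norm_smul, norm_smul, Real.norm_eq_abs,
        Real.norm_eq_abs]
      have := mul_le_mul hw1 (mul_le_mul_of_nonneg_left (norm_meanVel_le B.dir_le u w)
        (abs_nonneg τ)) (by positivity) zero_le_one
      linarith
    have e4 := mul_le_mul_of_nonneg_left e3 hL0
    have e5 := mul_le_mul_of_nonneg_left (B.abs_idist_sub_le hγ hh τ u hw1) hL0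
    have hLip : |(‖(γ + τ • h) (u + w) - (γ + τ • h) u‖ ^ (-α) - idist (γ + τ • h) u w ^ (-α)) -
        (‖γ (u + w) - γ u‖ ^ (-α) - idist γ u w ^ (-α))| ≤ (3 * K * L) * |τ| := by
      rw [sub_sub_sub_comm]
      refine (abs_sub _ _).trans ?_
      linarith
    refine (B.abs_mul_speed_sub_le hγ hh hτ _ _ hLip ha0).trans ?_
    refine mul_le_mul_of_nonneg_right ?_ (abs_nonneg τ)
    linarith [show 0 ≤ K ^ 2 * m ^ (-α) by positivity]

lemma exists_bound (B : DeformationBounds γ h c K τ₀) (hγ : ContDiff ℝ 1 γ)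
    (hh : ContDiff ℝ 1 h) (hγp : Function.Periodic γ 1) (hhp : Function.Periodic h 1)
    {α : ℝ} (hα : 0 < α) :
    ∃ C, 0 ≤ C ∧ ∀ u ∈ Ioc (0:ℝ) 1, ∀ w : ℝ, |w| ≤ 1 / 2 →
      |ohIntegrand α γ u w| ≤
        C * (meanSqOsc (deriv γ) u w / |w| ^ α + meanSqOsc (deriv h) u w / |w| ^ α + 1) ∧
      ∀ τ, |τ| ≤ τ₀ → |ohIntegrand α (γ + τ • h) u w - ohIntegrand α γ u w| ≤
        C * (meanSqOsc (deriv γ) u w / |w| ^ α + meanSqOsc (deriv h) u w / |w| ^ α + 1) * |τ| := by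
  obtain ⟨C₁, hC₁, h1⟩ := B.exists_near_bound hγ hh hα
  obtain ⟨C₂, hC₂, h2⟩ := B.exists_far_bound hγ hh hγp hhp hα
  refine ⟨C₁ + C₂, by positivity, fun u hu w hw => ?_⟩
  rw [← add_div]
  set Q := (meanSqOsc (deriv γ) u w + meanSqOsc (deriv h) u w) / |w| ^ α
  have hQ : 0 ≤ Q := div_nonneg (add_nonneg (meanSqOsc_nonneg _ _ _) (meanSqOsc_nonneg _ _ _))
    (by positivity)
  have hC₁Q : C₁ * Q ≤ (C₁ + C₂) * (Q + 1) := by nlinarith [mul_nonneg hC₂ hQ]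
  have hC₂Q : C₂ ≤ (C₁ + C₂) * (Q + 1) := by
    nlinarith [mul_nonneg hC₂ hQ, mul_nonneg hC₁ hQ]
  rcases le_total (4 * K * |w|) c with hwc | hwc
  · obtain ⟨h3, h4⟩ := h1 u hu w hw hwc
    exact ⟨h3.trans hC₁Q, fun τ hτ => (h4 τ hτ).trans
      (mul_le_mul_of_nonneg_right hC₁Q (abs_nonneg τ))⟩
  · obtain ⟨h3, h4⟩ := h2 u hu w hw hwc
    exact ⟨h3.trans hC₂Q, fun τ hτ => (h4 τ hτ).trans
      (mul_le_mul_of_nonneg_right hC₂Q (abs_nonneg τ))⟩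

end DeformationBounds

lemma hasDerivAt_norm_add_smul {E : Type*} [NormedAddCommGroup E] [InnerProductSpace ℝ E]
    {x : E} (hx : x ≠ 0) (y : E) :
    HasDerivAt (fun τ : ℝ => ‖x + τ • y‖) (⟪x, y⟫ / ‖x‖) 0 := by
  have h1 : HasDerivAt (fun τ : ℝ => x + τ • y) y 0 := by
    simpa using ((hasDerivAt_id (0:ℝ)).smul_const y).const_add x
  have h2 := h1.norm_sq.sqrt (by simpa using hx)
  simp only [Real.sqrt_sq (norm_nonneg _), zero_smul, add_zero] at h2
  rwa [mul_div_mul_left _ _ two_ne_zero] at h2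

namespace DeformationBounds

variable {γ h : ℝ → Rn n} {c K τ₀ : ℝ}

lemma deriv_ne_zero (B : DeformationBounds γ h c K τ₀) (x : ℝ) : deriv γ x ≠ 0 := by
  have := B.le_speed 0 B.zero_mem x
  rw [zero_smul, add_zero] at this
  exact norm_pos_iff.1 (B.c_pos.trans_le this)

lemma add_smul_ne (B : DeformationBounds γ h c K τ₀) (hγ : ContDiff ℝ 1 γ)
    (hh : ContDiff ℝ 1 h) {τ : ℝ} (hτ : |τ| ≤ τ₀) {u w : ℝ} (hu : u ∈ Ioc (0:ℝ) 1)
    (hw : |w| ≤ 1 / 2) (hw0 : w ≠ 0) : (γ + τ • h) (u + w) ≠ (γ + τ • h) u := by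
  rw [← sub_ne_zero, sub_eq_smul_meanVel (contDiff_add_smul hγ hh τ)]
  exact smul_ne_zero hw0 (norm_pos_iff.1 (B.c_pos.trans_le (B.le_meanVel τ hτ u hu w hw)))

lemma differentiableAt_integral_speed (B : DeformationBounds γ h c K τ₀) (hγ : ContDiff ℝ 1 γ)
    (hh : ContDiff ℝ 1 h) (a b : ℝ) :
    DifferentiableAt ℝ (fun τ : ℝ => ∫ θ in a..b, ‖deriv (γ + τ • h) θ‖) 0 := by
  have hγd := hγ.continuous_deriv le_rfl
  have hhd := hh.continuous_deriv le_rfl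
  simp only [deriv_add_smul hγ hh]
  refine (intervalIntegral.hasDerivAt_integral_of_dominated_loc_of_lip (μ := volume)
    (F := fun τ θ => ‖deriv γ θ + τ • deriv h θ‖) (bound := fun _ => K)
    (F' := fun θ => ⟪deriv γ θ, deriv h θ⟫ / ‖deriv γ θ‖)
    (x₀ := 0) (s := univ) univ_mem ?_ ?_ ?_ ?_ ?_ ?_).2.differentiableAt
  · exact Eventually.of_forall fun τ => Continuous.aestronglyMeasurable (by fun_prop)
  · exact Continuous.intervalIntegrable (by fun_prop) _ _
  · exact (Continuous.div (by fun_prop) (by fun_prop)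
      fun θ => norm_ne_zero_iff.2 (B.deriv_ne_zero θ)).aestronglyMeasurable
  · refine Eventually.of_forall fun θ _ => LipschitzOnWith.of_dist_le_mul fun x _ y _ => ?_
    rw [Real.coe_nnabs, abs_of_pos B.K_pos, Real.dist_eq, Real.dist_eq]
    refine (abs_norm_sub_norm_le _ _).trans ?_
    rw [add_sub_add_left_eq_sub, ← sub_smul, norm_smul, Real.norm_eq_abs, mul_comm]
    exact mul_le_mul_of_nonneg_right (B.dir_le θ) (abs_nonneg _)
  · exact intervalIntegrable_const
  · exact Eventually.of_forall fun θ _ => hasDerivAt_norm_add_smul (B.deriv_ne_zero θ) _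

lemma differentiableAt_ohIntegrand (B : DeformationBounds γ h c K τ₀) (hγ : ContDiff ℝ 1 γ)
    (hh : ContDiff ℝ 1 h) (hγp : Function.Periodic γ 1) (α : ℝ) {u w : ℝ}
    (hu : u ∈ Ioc (0:ℝ) 1) (hw : |w| ≤ 1 / 2) (hw0 : w ≠ 0)
    (htie : 2 * arcLen γ u w ≠ curveLen γ) :
    DifferentiableAt ℝ (fun τ : ℝ => ohIntegrand α (γ + τ • h) u w) 0 := by
  have e0 : γ + (0:ℝ) • h = γ := by rw [zero_smul, add_zero]
  have hne := B.add_smul_ne hγ hh B.zero_mem hu hw hw0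
  rw [e0] at hne
  have hD0 : 0 < ‖γ (u + w) - γ u‖ := norm_pos_iff.2 (sub_ne_zero.2 hne)
  have hid : 0 < idist γ u w := hD0.trans_le (norm_sub_le_idist hγ hγp (by linarith))
  have hD : DifferentiableAt ℝ (fun τ : ℝ => ‖(γ + τ • h) (u + w) - (γ + τ • h) u‖) 0 := by
    have := (hasDerivAt_norm_add_smul (sub_ne_zero.2 hne) (h (u + w) - h u)).differentiableAt
    have e : (fun τ : ℝ => ‖(γ + τ • h) (u + w) - (γ + τ • h) u‖) =
        fun τ => ‖γ (u + w) - γ u + τ • (h (u + w) - h u)‖ := by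
      funext τ
      congr 1
      simp only [Pi.add_apply, Pi.smul_apply, smul_sub]
      abel
    rwa [e]
  have hsp : ∀ x, DifferentiableAt ℝ (fun τ : ℝ => ‖deriv (γ + τ • h) x‖) 0 := by
    intro x
    simp only [deriv_add_smul hγ hh]
    exact (hasDerivAt_norm_add_smul (B.deriv_ne_zero x) _).differentiableAt
  have hL : DifferentiableAt ℝ (fun τ : ℝ => curveLen (γ + τ • h)) 0 :=
    B.differentiableAt_integral_speed hγ hh 0 1
  have hA : DifferentiableAt ℝ (fun τ : ℝ => arcLen (γ + τ • h) u w) 0 := by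
    refine (B.differentiableAt_integral_speed hγ hh u (u + w)).abs ?_
    rw [e0, ← abs_pos]
    exact hid.trans_le (min_le_left _ _)
  have hd : DifferentiableAt ℝ (fun τ : ℝ => idist (γ + τ • h) u w) 0 := by
    have hLA := hL.sub hA
    rcases lt_or_gt_of_ne htie with hlt | hlt
    · refine hA.congr_of_eventuallyEq ?_
      have := hA.continuousAt.eventually_lt hLA.continuousAt (by simp only [Pi.sub_apply, e0]; linarith)
      filter_upwards [this] with τ hτ
      exact min_eq_left hτ.le
    · refine hLA.congr_of_eventuallyEq ?_
      have := hLA.continuousAt.eventually_lt hA.continuousAt (by simp only [Pi.sub_apply, e0]; linarith)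
      filter_upwards [this] with τ hτ
      exact min_eq_right hτ.le
  have hinv : ∀ g : ℝ → ℝ, DifferentiableAt ℝ g 0 → 0 < g 0 →
      DifferentiableAt ℝ (fun τ => 1 / g τ ^ α) 0 := fun g hg hg0 =>
    (differentiableAt_const _).div (hg.rpow_const (Or.inl hg0.ne'))
      (Real.rpow_pos_of_pos hg0 α).ne'
  unfold ohIntegrand
  refine ((DifferentiableAt.sub (hinv _ hD ?_) (hinv _ hd ?_)).mul (hsp _)).mul (hsp _)
  · rwa [e0]
  · rwa [e0]

lemma ae_generic (B : DeformationBounds γ h c K τ₀) (hγ : ContDiff ℝ 1 γ) :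
    ∀ᵐ p : ℝ × ℝ, p.2 ≠ 0 ∧ 2 * arcLen γ p.1 p.2 ≠ curveLen γ := by
  have hA := continuous_arcLen hγ
  have hclosed : IsClosed {p : ℝ × ℝ | p.2 = 0 ∨ 2 * arcLen γ p.1 p.2 = curveLen γ} :=
    (isClosed_eq (by fun_prop) (by fun_prop)).union (isClosed_eq (by fun_prop) (by fun_prop))
  have hnull : volume {p : ℝ × ℝ | p.2 = 0 ∨ 2 * arcLen γ p.1 p.2 = curveLen γ} = 0 := by
    rw [Measure.volume_eq_prod, Measure.measure_prod_null hclosed.measurableSet]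
    refine Eventually.of_forall fun u => Countable.measure_zero ?_ _
    set P : ℝ → ℝ := fun w => ∫ θ in u..(u + w), ‖deriv γ θ‖ with hP
    have hii : ∀ x y : ℝ, IntervalIntegrable (fun θ => ‖deriv γ θ‖) volume x y :=
      fun x y => (hγ.continuous_deriv le_rfl).norm.intervalIntegrable _ _
    have hmono : StrictMono P := by
      intro a b hab
      rw [← sub_pos, hP]
      simp only
      rw [intervalIntegral.integral_interval_sub_left (hii _ _) (hii _ _)]
      exact intervalIntegral.intervalIntegral_pos_of_pos (hii _ _)
        (fun θ => norm_pos_iff.2 (B.deriv_ne_zero θ)) (by linarith)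
    have hfib : ∀ y, (P ⁻¹' {y}).Countable := fun y =>
      (subsingleton_singleton.preimage hmono.injective).countable
    refine (((countable_singleton (0:ℝ)).union (hfib (curveLen γ / 2))).union
      (hfib (-(curveLen γ / 2)))).mono ?_
    rintro w (hw | hw)
    · exact Or.inl (Or.inl hw)
    · have h1 : |P w| = curveLen γ / 2 := by
        have : 2 * |P w| = curveLen γ := hw
        linarith
      rcases eq_or_eq_neg_of_abs_eq h1 with h2 | h2
      · exact Or.inl (Or.inr h2)
      · exact Or.inr h2
  rw [measure_eq_zero_iff_ae_notMem] at hnull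
  filter_upwards [hnull] with p hp
  simpa [not_or] using hp

end DeformationBounds

/-- Differentiation under the integral sign with a bound on the difference quotients at `0`. -/
lemma integrable_and_tendsto_slope_integral {X : Type*} [MeasurableSpace X] {μ : Measure X}
    {F : ℝ → X → ℝ} {F' bound : X → ℝ} {r : ℝ} (hr : 0 < r)
    (hmeas : ∀ τ, AEStronglyMeasurable (F τ) μ) (hint : ∀ τ, |τ| ≤ r → Integrable (F τ) μ)
    (hbound : ∀ᵐ x ∂μ, ∀ τ, |τ| ≤ r → |F τ x - F 0 x| ≤ bound x * |τ|)
    (hbi : Integrable bound μ) (hderiv : ∀ᵐ x ∂μ, HasDerivAt (fun τ => F τ x) (F' x) 0) :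
    Integrable F' μ ∧
      Tendsto (fun τ => ((∫ x, F τ x ∂μ) - ∫ x, F 0 x ∂μ) / τ) (𝓝[≠] 0) (𝓝 (∫ x, F' x ∂μ)) := by
  have hqm : ∀ τ, AEStronglyMeasurable (fun x => (F τ x - F 0 x) / τ) μ := fun τ => by
    simpa only [div_eq_mul_inv, Pi.sub_apply] using ((hmeas τ).sub (hmeas 0)).mul_const τ⁻¹
  have hlim : ∀ᵐ x ∂μ, Tendsto (fun τ => (F τ x - F 0 x) / τ) (𝓝[≠] 0) (𝓝 (F' x)) := by
    filter_upwards [hderiv] with x hx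
    have := hasDerivAt_iff_tendsto_slope_zero.1 hx
    simpa [div_eq_inv_mul] using this
  have hsmall : ∀ᶠ τ : ℝ in 𝓝[≠] 0, |τ| ≤ r ∧ τ ≠ 0 := by
    refine Eventually.and (nhdsWithin_le_nhds ?_) self_mem_nhdsWithin
    filter_upwards [Metric.ball_mem_nhds (0:ℝ) hr] with τ hτ
    simpa using (mem_ball_zero_iff.1 hτ).le
  have hq : ∀ᶠ τ in 𝓝[≠] 0, ∀ᵐ x ∂μ, ‖(F τ x - F 0 x) / τ‖ ≤ bound x := by
    filter_upwards [hsmall] with τ hτ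
    filter_upwards [hbound] with x hx
    rw [Real.norm_eq_abs, abs_div, div_le_iff₀ (abs_pos.2 hτ.2)]
    exact hx τ hτ.1
  refine ⟨?_, ?_⟩
  · refine hbi.mono' (aestronglyMeasurable_of_tendsto_ae _ hqm hlim) ?_
    filter_upwards [hlim, hbound] with x hx hb
    refine le_of_tendsto hx.norm ?_
    filter_upwards [hsmall] with τ hτ
    rw [Real.norm_eq_abs, abs_div, div_le_iff₀ (abs_pos.2 hτ.2)]
    exact hb τ hτ.1
  · refine (tendsto_integral_filter_of_dominated_convergence bound
      (Eventually.of_forall hqm) hq hbi hlim).congr' ?_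
    filter_upwards [hsmall] with τ hτ
    rw [integral_div, integral_sub (hint τ hτ.1) (hint 0 (by simpa using hr.le))]

lemma measurableSet_energyDom : MeasurableSet energyDom := measurableSet_Ioc.prod measurableSet_Ioo

/-- The part of `energyDom` seen by the truncated energy. -/
def truncDom (ε : ℝ) : Set (ℝ × ℝ) := Ioc (0:ℝ) 1 ×ˢ (Wset ε ∩ Ioo (-(1:ℝ)/2) (1/2))

lemma measurableSet_Wset (ε : ℝ) : MeasurableSet (Wset ε) := measurableSet_Icc.union measurableSet_Icc

lemma measurableSet_truncDom (ε : ℝ) : MeasurableSet (truncDom ε) :=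
  measurableSet_Ioc.prod ((measurableSet_Wset ε).inter measurableSet_Ioo)

lemma truncDom_subset (ε : ℝ) : truncDom ε ⊆ energyDom := prod_mono subset_rfl inter_subset_right

lemma Wset_inter_ae_eq {ε : ℝ} (hε : 0 < ε) :
    (Wset ε ∩ Ioo (-(1:ℝ)/2) (1/2) : Set ℝ) =ᵐ[volume] Wset ε := by
  have h1 : (Wset ε ∩ Ioo (-(1:ℝ)/2) (1/2) : Set ℝ) =ᵐ[volume]
      (Wset ε ∩ Icc (-(1:ℝ)/2) (1/2) : Set ℝ) :=
    (ae_eq_refl _).inter Ioo_ae_eq_Icc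
  have hsub : Wset ε ⊆ Icc (-(1:ℝ)/2) (1/2) := by
    rintro w (⟨h2, h3⟩ | ⟨h2, h3⟩)
    · exact ⟨h2, by linarith⟩
    · exact ⟨by linarith, h3⟩
  rwa [inter_eq_left.2 hsub] at h1

lemma oharaEeps_eq {α ε : ℝ} (hε : 0 < ε) {f : ℝ → Rn n}
    (hint : IntegrableOn (fun p : ℝ × ℝ => ohIntegrand α f p.1 p.2) energyDom) :
    oharaEeps α ε f = ∫ p in truncDom ε, ohIntegrand α f p.1 p.2 := by
  have hint' := hint.mono_set (truncDom_subset ε)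
  rw [truncDom, Measure.volume_eq_prod] at hint' ⊢
  rw [setIntegral_prod _ hint', oharaEeps]
  simp only [setIntegral_congr_set (Wset_inter_ae_eq hε)]

lemma oharaER_eq {α : ℝ} {f : ℝ → Rn n} (hf : ContDiff ℝ 1 f)
    (hnonneg : ∀ p ∈ energyDom, p.2 ≠ 0 → 0 ≤ ohIntegrand α f p.1 p.2) :
    oharaER α f = ∫ p in energyDom, ohIntegrand α f p.1 p.2 := by
  have hm := measurable_ohIntegrand hf α
  have hm' : Measurable fun p : ℝ × ℝ => ENNReal.ofReal (ohIntegrand α f p.1 p.2) :=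
    hm.ennreal_ofReal
  have hne : ∀ᵐ p : ℝ × ℝ, p.2 ≠ 0 := by
    rw [Measure.volume_eq_prod]
    exact Measure.quasiMeasurePreserving_snd.ae (Measure.ae_ne volume 0)
  rw [integral_eq_lintegral_of_nonneg_ae _ hm.aestronglyMeasurable, oharaER, oharaE, energyDom,
    Measure.volume_eq_prod, ← Measure.prod_restrict,
    lintegral_prod _ hm'.aemeasurable]
  filter_upwards [ae_restrict_mem measurableSet_energyDom, ae_restrict_of_ae hne] with p hp hp0
  exact hnonneg p hp hp0

lemma tendsto_setIntegral_truncDom {F : ℝ × ℝ → ℝ} (hF : IntegrableOn F energyDom) :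
    Tendsto (fun ε => ∫ p in truncDom ε, F p) (𝓝[>] 0) (𝓝 (∫ p in energyDom, F p)) := by
  have hcover : AECover (volume.restrict energyDom) (𝓝[>] (0:ℝ)) truncDom := by
    refine ⟨?_, measurableSet_truncDom⟩
    have hne : ∀ᵐ p : ℝ × ℝ, p.2 ≠ 0 := by
      rw [Measure.volume_eq_prod]
      exact Measure.quasiMeasurePreserving_snd.ae (Measure.ae_ne volume 0)
    filter_upwards [ae_restrict_mem measurableSet_energyDom, ae_restrict_of_ae hne] with p hp hp0
    filter_upwards [Ioo_mem_nhdsGT (abs_pos.2 hp0)] with ε hε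
    refine ⟨hp.1, ?_, hp.2⟩
    rcases le_abs.1 hε.2.le with h1 | h1
    · exact Or.inr ⟨h1, hp.2.2.le⟩
    · exact Or.inl ⟨hp.2.1.le, by linarith⟩
  refine (hcover.integral_tendsto_of_countably_generated hF).congr fun ε => ?_
  rw [Measure.restrict_restrict (measurableSet_truncDom ε), inter_eq_left.2 (truncDom_subset ε)]

/-- For an injective regular `γ₀ ∈ H^{(1+α)/2,2}` and `h ∈ H^{(1+α)/2,2}`,
the directional derivative `δE^α(γ₀;h)` exists and `δE^α(γ₀;h) = lim_{ε↘0} δE^α_ε(γ₀;h)`. -/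
theorem statement9 {n : ℕ} (hn : 2 ≤ n) {α : ℝ} (hα : α ∈ Ioo (2:ℝ) 3)
    {γ₀ : ℝ → Rn n} (hγ₀ : MemH1 ((α - 1) / 2) γ₀) (hinj : PerInjective γ₀)
    (hreg : RegularCurve γ₀) {h : ℝ → Rn n} (hh : MemH1 ((α - 1) / 2) h) :
    ∃ d : ℝ, ∃ dE : ℝ → ℝ,
      HasDirDeriv (oharaER α) γ₀ h d ∧
      (∀ ε : ℝ, 0 < ε → HasDirDeriv (oharaEeps α ε) γ₀ h (dE ε)) ∧
      Tendsto dE (𝓝[>] (0:ℝ)) (𝓝 d) := by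
  obtain ⟨hγp, hγ, hγg⟩ := hγ₀
  obtain ⟨hhp, hh, hhg⟩ := hh
  have hα0 : 0 < α := by linarith [hα.1]
  obtain ⟨c, K, τ₀, B⟩ := exists_deformationBounds hγ hh hγp hhp hinj hreg
  obtain ⟨C, -, hC⟩ := B.exists_bound hγ hh hγp hhp hα0
  set F : ℝ → ℝ × ℝ → ℝ := fun τ p => ohIntegrand α (γ₀ + τ • h) p.1 p.2 with hF
  have e0 : γ₀ + (0:ℝ) • h = γ₀ := by rw [zero_smul, add_zero]
  set bound : ℝ × ℝ → ℝ := fun p => C * (meanSqOsc (deriv γ₀) p.1 p.2 / |p.2| ^ α +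
    meanSqOsc (deriv h) p.1 p.2 / |p.2| ^ α + 1) with hbound
  have hvol : volume energyDom ≠ ⊤ := by
    rw [energyDom, Measure.volume_eq_prod, Measure.prod_prod]
    simp
  have hbi : IntegrableOn bound energyDom := by
    have hosc : ∀ f : ℝ → Rn n, Function.Periodic f 1 → ContDiff ℝ 1 f →
        gagliardoSq ((α - 1) / 2) (deriv f) < ⊤ →
        IntegrableOn (fun p : ℝ × ℝ => meanSqOsc (deriv f) p.1 p.2 / |p.2| ^ α) energyDom := by
      intro f hp hf hg
      have := integrableOn_meanSqOsc (hf.continuous_deriv le_rfl) hp.deriv'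
        (by linarith [hα.1]) hg
      rwa [show 1 + 2 * ((α - 1) / 2) = α by ring] at this
    exact (((hosc γ₀ hγp hγ hγg).add (hosc h hhp hh hhg)).add
      (integrableOn_const hvol)).const_mul C
  have hdom : ∀ {p : ℝ × ℝ}, p ∈ energyDom → |p.2| ≤ 1 / 2 := fun hp =>
    abs_le.2 ⟨by linarith [hp.2.1], hp.2.2.le⟩
  have hmeas : ∀ τ, Measurable (F τ) := fun τ => measurable_ohIntegrand (contDiff_add_smul hγ hh τ) α
  have hdiff : ∀ᵐ p ∂volume.restrict energyDom, ∀ τ, |τ| ≤ τ₀ →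
      |F τ p - F 0 p| ≤ bound p * |τ| := by
    filter_upwards [ae_restrict_mem measurableSet_energyDom] with p hp τ hτ
    simp only [hF, e0]
    exact (hC p.1 hp.1 p.2 (hdom hp)).2 τ hτ
  have hint0 : IntegrableOn (F 0) energyDom := by
    refine Integrable.mono' hbi (hmeas 0).aestronglyMeasurable ?_
    filter_upwards [ae_restrict_mem measurableSet_energyDom] with p hp
    simp only [hF, e0]
    exact (hC p.1 hp.1 p.2 (hdom hp)).1
  have hint : ∀ τ, |τ| ≤ τ₀ → IntegrableOn (F τ) energyDom := by
    intro τ hτ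
    have h1 : IntegrableOn (F τ - F 0) energyDom := by
      refine Integrable.mono' (hbi.mul_const |τ|)
        ((hmeas τ).sub (hmeas 0)).aestronglyMeasurable ?_
      filter_upwards [hdiff] with p hp using hp τ hτ
    simpa using h1.add hint0
  set F' : ℝ × ℝ → ℝ := fun p => deriv (fun τ => F τ p) 0
  have hderiv : ∀ᵐ p ∂volume.restrict energyDom, HasDerivAt (fun τ => F τ p) (F' p) 0 := by
    filter_upwards [ae_restrict_mem measurableSet_energyDom,
      ae_restrict_of_ae (B.ae_generic hγ)] with p hp hp'
    exact (B.differentiableAt_ohIntegrand hγ hh hγp α hp.1 (hdom hp) hp'.1 hp'.2).hasDerivAt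
  have hmain : ∀ S ⊆ energyDom, IntegrableOn F' S ∧ Tendsto
      (fun τ => ((∫ p in S, F τ p) - ∫ p in S, F 0 p) / τ) (𝓝[≠] 0) (𝓝 (∫ p in S, F' p)) :=
    fun S hS => integrable_and_tendsto_slope_integral B.τ₀_pos
      (fun τ => (hmeas τ).aestronglyMeasurable) (fun τ hτ => (hint τ hτ).mono_set hS)
      (ae_restrict_of_ae_restrict_of_subset hS hdiff) (hbi.mono_set hS)
      (ae_restrict_of_ae_restrict_of_subset hS hderiv)
  have hsmall : ∀ᶠ τ : ℝ in 𝓝[≠] 0, |τ| ≤ τ₀ := by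
    refine nhdsWithin_le_nhds ?_
    filter_upwards [Metric.ball_mem_nhds (0:ℝ) B.τ₀_pos] with τ hτ
    simpa using (mem_ball_zero_iff.1 hτ).le
  have hdir : ∀ (E : (ℝ → Rn n) → ℝ), ∀ S ⊆ energyDom,
      (∀ τ, |τ| ≤ τ₀ → E (γ₀ + τ • h) = ∫ p in S, F τ p) →
      HasDirDeriv E γ₀ h (∫ p in S, F' p) := by
    intro E S hS hE
    refine (hmain S hS).2.congr' ?_
    filter_upwards [hsmall] with τ hτ
    rw [hE τ hτ, ← hE 0 B.zero_mem, e0]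
  refine ⟨∫ p in energyDom, F' p, fun ε => ∫ p in truncDom ε, F' p, ?_, fun ε hε => ?_,
    tendsto_setIntegral_truncDom (hmain _ subset_rfl).1⟩
  · refine hdir _ _ subset_rfl fun τ hτ => oharaER_eq (contDiff_add_smul hγ hh τ) fun p hp hp0 => ?_
    exact ohIntegrand_nonneg (contDiff_add_smul hγ hh τ) (periodic_add_smul hγp hhp τ) hα0.le
      ((hdom hp).trans (by norm_num)) (B.add_smul_ne hγ hh hτ hp.1 (hdom hp) hp0)
  · exact hdir _ _ (truncDom_subset ε) fun τ hτ => oharaEeps_eq hε (hint τ hτ)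

end
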